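/- arXiv:1005.0181 — 2 statements merged into one kernel-verified Lean document; each statement's English description precedes it below -/
import Mathlib

section
/- For every limit-periodic potential W : ℤ → ℝ and every ε > 0 there exist a limit-periodic potential V : ℤ → ℝ with sup_n |V(n) − W(n)| ≤ ε, a real number E*, a real γ > 0, and p_k-periodic potentials V^k (k ≥ 1) with (p_k) strictly increasing, such that: (a) V(n) = V^k(n) for all 0 ≤ n ≤ p_k and sup_n |V(n) − V^k(n)| → 0; (b) for every k, limsup_{N→∞} (1/N)·log‖A_N(E*, V^k)‖ ≥ γ; and (c) liminf_{E → E*} [ liminf_{N→∞} (1/N)·log‖A_N(E, V)‖ ] = 0, where the outer liminf is over punctured neighborhoods of E*. -/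
/-!
Start from a periodic potential close to `W`. Right above an energy `z` where its transfer matrix
`F` over a period is elliptic there is an interval `[a, b]` of energies where `F` is hyperbolic
with a definite exponent. Repeat the potential over `n` periods and then raise it by `a - z` over
`m` more periods: the new transfer matrix is `F (x - (a - z)) ^ m * F x ^ n`. At `x = a` the first
factor is a power of the elliptic matrix `F z`, so for some `m` it rotates the expanding direction
of `F a` far enough to make the trace negative, while at `x = b` both factors are hyperbolic and
aligned and the trace is positive. At the last energy `z' ∈ (a, b)` where the expanding part of
the trace vanishes the new potential is elliptic once `n` is large, and immediately to the right
of `z'` it is hyperbolic with the same exponent, so that the construction can be iterated.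

The windows shrink to an energy `Estar` at which every potential of the sequence keeps the
exponent. Choosing `n` large enough at each stage also keeps the growth at the earlier elliptic
energies slow, and these energies converge to `Estar`.
-/

open Filter Matrix

/-- The transfer matrix `A_N(E,V) = ∏_{n=1}^N [[E − V(N−n), −1],[1,0]]`,
with the `n = 1` factor leftmost. -/
noncomputable def transferMatrix (V : ℤ → ℝ) (E : ℝ) (N : ℕ) : Matrix (Fin 2) (Fin 2) ℝ :=
  (((List.range N).map
    (fun n => !![E - V ((N : ℤ) - ((n : ℤ) + 1)), -1; (1 : ℝ), 0])).prod)

/-- Operator norm (Euclidean, i.e. ℓ²→ℓ²) of a 2×2 real matrix. -/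
noncomputable def opNorm (A : Matrix (Fin 2) (Fin 2) ℝ) : ℝ :=
  ‖LinearMap.toContinuousLinearMap (Matrix.toEuclideanLin A)‖

/-- `H` is a Schrödinger operator on `ℓ²(ℤ,ℂ)` with potential `V`. -/
def IsSchrodingerOp (V : ℤ → ℝ)
    (H : lp (fun _ : ℤ => ℂ) 2 →L[ℂ] lp (fun _ : ℤ => ℂ) 2) : Prop :=
  ∀ ψ : lp (fun _ : ℤ => ℂ) 2, ∀ n : ℤ,
    H ψ n = ψ (n + 1) + ψ (n - 1) + (V n : ℂ) * ψ n

/-- `V` is `p`-periodic. -/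
def IsPeriodic (V : ℤ → ℝ) (p : ℕ) : Prop :=
  ∀ n : ℤ, V (n + (p : ℤ)) = V n

/-- `V` is limit-periodic: a uniform limit of periodic potentials. -/
def IsLimitPeriodic (V : ℤ → ℝ) : Prop :=
  ∃ (W : ℕ → ℤ → ℝ) (p : ℕ → ℕ),
    (∀ k, 1 ≤ p k ∧ IsPeriodic (W k) (p k)) ∧
    (∀ ε > (0 : ℝ), ∃ K : ℕ, ∀ k ≥ K, ∀ n : ℤ, |V n - W k n| ≤ ε)

/-- `(1/N)·log‖A_N(E,V)‖`. -/
noncomputable def logNormRate (V : ℤ → ℝ) (E : ℝ) (N : ℕ) : ℝ :=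
  (1 / (N : ℝ)) * Real.log (opNorm (transferMatrix V E N))

/-- Individual (upper) Lyapunov exponent `limsup_N (1/N) log‖A_N(E,V)‖`. -/
noncomputable def lyapExp (V : ℤ → ℝ) (E : ℝ) : ℝ :=
  Filter.limsup (fun N : ℕ => logNormRate V E N) Filter.atTop

/-- Bottom of the (real trace of the) spectrum of `H`. -/
noncomputable def specInf (H : lp (fun _ : ℤ => ℂ) 2 →L[ℂ] lp (fun _ : ℤ => ℂ) 2) : ℝ :=
  sInf {x : ℝ | (x : ℂ) ∈ spectrum ℂ H}

namespace LimitPeriodic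

open scoped Matrix.Norms.L2Operator Topology

local notation "Mat₂" => Matrix (Fin 2) (Fin 2) ℝ

section Eigenvalues

/-- The larger eigenvalue of a real `2 × 2` matrix with nonnegative discriminant. -/
noncomputable def eigMax (A : Mat₂) : ℝ := (A.trace + √A.discr) / 2

/-- The smaller eigenvalue of a real `2 × 2` matrix with nonnegative discriminant. -/
noncomputable def eigMin (A : Mat₂) : ℝ := (A.trace - √A.discr) / 2

/-- The spectral projection of `A` onto the `eigMax` eigenline, multiplied by the difference
`√A.discr` of the eigenvalues: without the division it is continuous in `A` everywhere. -/
noncomputable def unstablePart (A : Mat₂) : Mat₂ := A - eigMin A • 1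

/-- The coefficient of `unstablePart A` in `A ^ n`, namely
`(eigMax A ^ n - eigMin A ^ n) / (eigMax A - eigMin A)` written without division. -/
noncomputable def powCoeff (A : Mat₂) (n : ℕ) : ℝ :=
  ∑ i ∈ Finset.range n, eigMax A ^ i * eigMin A ^ (n - 1 - i)

variable {A : Mat₂}

lemma mul_self_eq_trace_smul_sub_det_smul (A : Mat₂) : A * A = A.trace • A - A.det • 1 := by
  ext i j
  fin_cases i <;> fin_cases j <;>
    simp [Matrix.mul_apply, Fin.sum_univ_two, Matrix.trace_fin_two, Matrix.det_fin_two] <;> ring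

lemma eigMax_add_eigMin (A : Mat₂) : eigMax A + eigMin A = A.trace := by
  unfold eigMax eigMin; ring

lemma eigMax_sub_eigMin (A : Mat₂) : eigMax A - eigMin A = √A.discr := by
  unfold eigMax eigMin; ring

lemma eigMax_mul_eigMin (hA : 0 ≤ A.discr) : eigMax A * eigMin A = A.det := by
  have hsq := Real.sq_sqrt hA
  rw [eigMax, eigMin]
  linear_combination (-hsq - Matrix.discr_fin_two A) / 4

lemma trace_unstablePart (A : Mat₂) : (unstablePart A).trace = √A.discr := by
  rw [unstablePart, Matrix.trace_sub, Matrix.trace_smul, Matrix.trace_one, ← eigMax_add_eigMin,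
    ← eigMax_sub_eigMin]
  simp only [Fintype.card_fin, Nat.cast_ofNat, smul_eq_mul]
  ring

lemma mul_unstablePart (hA : 0 ≤ A.discr) : A * unstablePart A = eigMax A • unstablePart A := by
  rw [unstablePart, mul_sub, mul_self_eq_trace_smul_sub_det_smul, ← eigMax_add_eigMin,
    ← eigMax_mul_eigMin hA, Matrix.mul_smul, mul_one]
  module

lemma pow_mul_unstablePart (hA : 0 ≤ A.discr) (n : ℕ) :
    A ^ n * unstablePart A = eigMax A ^ n • unstablePart A := by
  induction n with
  | zero => simp
  | succ n ih => rw [pow_succ, mul_assoc, mul_unstablePart hA, Matrix.mul_smul, ih, smul_smul,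
      pow_succ']

lemma det_unstablePart (hA : 0 ≤ A.discr) : (unstablePart A).det = 0 := by
  have h := eigMax_mul_eigMin hA
  have h' := eigMax_add_eigMin A
  rw [Matrix.det_fin_two] at h
  rw [Matrix.trace_fin_two] at h'
  rw [unstablePart, Matrix.det_fin_two]
  simp only [Matrix.sub_apply, Matrix.smul_apply, Matrix.one_apply_eq, smul_eq_mul, ne_eq,
    Matrix.one_apply_ne, zero_ne_one, one_ne_zero, not_false_eq_true, mul_one, mul_zero, sub_zero]
  linear_combination eigMin A * h' - h

lemma powCoeff_succ (A : Mat₂) (n : ℕ) :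
    powCoeff A (n + 1) = eigMax A ^ n + eigMin A * powCoeff A n :=
  geom_sum₂_succ_eq _ _

lemma pow_eq_powCoeff_smul (hA : 0 ≤ A.discr) (n : ℕ) :
    A ^ n = powCoeff A n • unstablePart A + eigMin A ^ n • 1 := by
  induction n with
  | zero => simp [powCoeff]
  | succ n ih =>
    calc A ^ (n + 1) = A ^ n * unstablePart A + eigMin A • A ^ n := by
          rw [unstablePart, mul_sub, Matrix.mul_smul, mul_one, pow_succ, sub_add_cancel]
      _ = _ := by
          rw [pow_mul_unstablePart hA, ih, powCoeff_succ]
          module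

lemma continuous_eigMin : Continuous eigMin := by
  unfold eigMin
  simp only [Matrix.discr_fin_two]
  fun_prop

lemma continuous_unstablePart : Continuous unstablePart := by
  unfold unstablePart
  have := continuous_eigMin
  fun_prop

lemma unstablePart_smul {c : ℝ} (hc : 0 ≤ c) (A : Mat₂) :
    unstablePart (c • A) = c • unstablePart A := by
  have hdiscr : (c • A).discr = c ^ 2 * A.discr := by
    simp only [Matrix.discr_fin_two, Matrix.trace_smul, Matrix.det_smul, Fintype.card_fin,
      smul_eq_mul]
    ring
  rw [unstablePart, unstablePart, eigMin, eigMin, hdiscr, Matrix.trace_smul,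
    Real.sqrt_mul (sq_nonneg c), Real.sqrt_sq hc, smul_eq_mul]
  module

end Eigenvalues

section Unimodular

variable {A : Mat₂}

lemma isHyperbolic_of_two_lt_trace (hdet : A.det = 1) (htr : 2 < A.trace) : A.IsHyperbolic := by
  rw [Matrix.IsHyperbolic, Matrix.discr_fin_two, hdet]
  nlinarith

lemma eigMax_mul_eigMin_eq_one (hdet : A.det = 1) (htr : 2 < A.trace) :
    eigMax A * eigMin A = 1 := by
  rw [eigMax_mul_eigMin (isHyperbolic_of_two_lt_trace hdet htr).le, hdet]

lemma eigMin_lt_eigMax (hA : A.IsHyperbolic) : eigMin A < eigMax A := by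
  have := eigMax_sub_eigMin A
  have := Real.sqrt_pos.2 hA
  linarith

lemma eigMin_pos (hdet : A.det = 1) (htr : 2 < A.trace) : 0 < eigMin A := by
  have hmul := eigMax_mul_eigMin_eq_one hdet htr
  have hsum := eigMax_add_eigMin A
  have hlt := eigMin_lt_eigMax (isHyperbolic_of_two_lt_trace hdet htr)
  nlinarith

lemma eigMin_lt_one (hdet : A.det = 1) (htr : 2 < A.trace) : eigMin A < 1 := by
  have hmul := eigMax_mul_eigMin_eq_one hdet htr
  have hlt := eigMin_lt_eigMax (isHyperbolic_of_two_lt_trace hdet htr)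
  nlinarith [eigMin_pos hdet htr]

lemma trace_sub_one_lt_eigMax (hdet : A.det = 1) (htr : 2 < A.trace) :
    A.trace - 1 < eigMax A := by
  have := eigMin_lt_one hdet htr
  have := eigMax_add_eigMin A
  linarith

lemma powCoeff_nonneg (hdet : A.det = 1) (htr : 2 < A.trace) (n : ℕ) : 0 ≤ powCoeff A n := by
  have hmin := eigMin_pos hdet htr
  have hmax := hmin.trans (eigMin_lt_eigMax (isHyperbolic_of_two_lt_trace hdet htr))
  unfold powCoeff
  positivity

lemma eigMax_pow_le_powCoeff_succ (hdet : A.det = 1) (htr : 2 < A.trace) (n : ℕ) :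
    eigMax A ^ n ≤ powCoeff A (n + 1) := by
  have := mul_nonneg (eigMin_pos hdet htr).le (powCoeff_nonneg hdet htr n)
  rw [powCoeff_succ]
  linarith

lemma tendsto_powCoeff_atTop (hdet : A.det = 1) (htr : 2 < A.trace) :
    Tendsto (powCoeff A) atTop atTop := by
  rw [← tendsto_add_atTop_iff_nat 1]
  have hone : 1 < eigMax A := by linarith [trace_sub_one_lt_eigMax hdet htr]
  exact tendsto_atTop_mono (eigMax_pow_le_powCoeff_succ hdet htr)
    (tendsto_pow_atTop_atTop_of_one_lt hone)

lemma eigMax_pow_le_norm_pow (hdet : A.det = 1) (htr : 2 < A.trace) (n : ℕ) :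
    eigMax A ^ n ≤ ‖A ^ n‖ := by
  have hA := isHyperbolic_of_two_lt_trace hdet htr
  have hmax : 0 < eigMax A := (eigMin_pos hdet htr).trans (eigMin_lt_eigMax hA)
  have hne : unstablePart A ≠ 0 := fun h => by
    have htrace := trace_unstablePart A
    rw [h, Matrix.trace_zero] at htrace
    exact (Real.sqrt_pos.2 hA).ne htrace
  have hmul := norm_mul_le (A ^ n) (unstablePart A)
  rw [pow_mul_unstablePart hA.le, norm_smul, Real.norm_of_nonneg (by positivity)] at hmul
  exact le_of_mul_le_mul_right hmul (norm_pos_iff.2 hne)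

lemma pow_add_two_of_det_eq_one (hdet : A.det = 1) (n : ℕ) :
    A ^ (n + 2) = A.trace • A ^ (n + 1) - A ^ n := by
  rw [pow_add, pow_two, mul_self_eq_trace_smul_sub_det_smul, hdet, mul_sub, Matrix.mul_smul,
    ← pow_succ, one_smul, mul_one]

lemma pow_isBigO_one_of_abs_trace_lt_two (hdet : A.det = 1) (htr : |A.trace| < 2) :
    (fun n => A ^ n) =O[atTop] fun _ => (1 : ℝ) := by
  obtain ⟨hlo, hhi⟩ := abs_lt.1 htr
  have hden : 0 < 4 - A.trace ^ 2 := by nlinarith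
  -- `det (u • A + v • 1)` is the positive definite form `u² + (tr A) u v + v²`.
  have hcoeff : ∀ n : ℕ, ∃ u v : ℝ,
      A ^ n = u • A + v • 1 ∧ u ^ 2 + A.trace * u * v + v ^ 2 = 1 := by
    intro n
    induction n with
    | zero => exact ⟨0, 1, by simp, by ring⟩
    | succ n ih =>
      obtain ⟨u, v, hpow, hform⟩ := ih
      refine ⟨A.trace * u + v, -u, ?_, by linear_combination hform⟩
      rw [pow_succ, hpow, add_mul, Matrix.smul_mul, mul_self_eq_trace_smul_sub_det_smul, hdet,
        Matrix.smul_mul, one_mul]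
      module
  set K := √(4 / (4 - A.trace ^ 2))
  refine .of_bound (K * ‖A‖ + K) (.of_forall fun n => ?_)
  obtain ⟨u, v, hpow, hform⟩ := hcoeff n
  have hu : |u| ≤ K := by
    refine Real.abs_le_sqrt ((le_div_iff₀ hden).2 ?_)
    nlinarith [sq_nonneg (v + A.trace * u / 2)]
  have hv : |v| ≤ K := by
    refine Real.abs_le_sqrt ((le_div_iff₀ hden).2 ?_)
    nlinarith [sq_nonneg (u + A.trace * v / 2)]
  calc ‖A ^ n‖ ≤ |u| * ‖A‖ + |v| := by
        rw [hpow]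
        refine (norm_add_le _ _).trans_eq ?_
        rw [norm_smul, norm_smul, Real.norm_eq_abs, Real.norm_eq_abs, norm_one, mul_one]
    _ ≤ (K * ‖A‖ + K) * ‖(1 : ℝ)‖ := by
        rw [norm_one, mul_one]
        gcongr

end Unimodular

section Norm

lemma opNorm_eq_norm (A : Mat₂) : opNorm A = ‖A‖ := by
  rw [Matrix.l2_opNorm_def]
  rfl

/-- The rotation by a right angle, i.e. the standard symplectic form on the plane. -/
def quarterTurn : Mat₂ := !![0, -1; 1, 0]

lemma norm_quarterTurn : ‖quarterTurn‖ = 1 := by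
  have hmul : quarterTurnᴴ * quarterTurn = 1 := by
    ext i j
    fin_cases i <;> fin_cases j <;> simp [quarterTurn, Matrix.mul_apply, Fin.sum_univ_two]
  have hsq : ‖quarterTurn‖ * ‖quarterTurn‖ = 1 := by
    rw [← Matrix.l2_opNorm_conjTranspose_mul_self, hmul, norm_one]
  nlinarith [norm_nonneg quarterTurn]

lemma abs_det_le_sq_norm (A : Mat₂) : |A.det| ≤ ‖A‖ ^ 2 := by
  have hpreserve : A * quarterTurn * Aᴴ = A.det • quarterTurn := by
    ext i j
    fin_cases i <;> fin_cases j <;>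
      simp [quarterTurn, Matrix.mul_apply, Fin.sum_univ_two, Matrix.det_fin_two] <;> ring
  calc |A.det| = ‖A * quarterTurn * Aᴴ‖ := by
        rw [hpreserve, norm_smul, norm_quarterTurn, mul_one, Real.norm_eq_abs]
    _ ≤ ‖A‖ * ‖quarterTurn‖ * ‖Aᴴ‖ := norm_mul₃_le
    _ = ‖A‖ ^ 2 := by rw [norm_quarterTurn, Matrix.l2_opNorm_conjTranspose, mul_one, sq]

lemma one_le_norm_of_det_eq_one {A : Mat₂} (hdet : A.det = 1) : 1 ≤ ‖A‖ := by
  have h := abs_det_le_sq_norm A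
  rw [hdet, abs_one] at h
  exact (one_le_sq_iff₀ (norm_nonneg A)).1 h

end Norm

section Alignment

variable {A X Y N : Mat₂}

/-- The expanding eigenprojections of two hyperbolic matrices have a product of positive trace.
Scaling the projections by positive factors does not affect the sign, so the condition is stated
for `unstablePart`. For matrices of determinant `1` and trace above `2` it forces the products of
powers of `X` and `Y` to have positive trace. -/
def Aligned (X Y : Mat₂) : Prop := 0 < (unstablePart X * unstablePart Y).trace

lemma aligned_self (hX : X.IsHyperbolic) : Aligned X X := by
  have hsq : unstablePart X * unstablePart X = √X.discr • unstablePart X := by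
    nth_rewrite 1 [unstablePart]
    rw [sub_mul, mul_unstablePart hX.le, Matrix.smul_mul, one_mul, ← sub_smul, eigMax_sub_eigMin]
  rw [Aligned, hsq, Matrix.trace_smul, trace_unstablePart, smul_eq_mul]
  exact mul_pos (Real.sqrt_pos.2 hX) (Real.sqrt_pos.2 hX)

lemma aligned_smul_iff {c d : ℝ} (hc : 0 < c) (hd : 0 < d) :
    Aligned (c • X) (d • Y) ↔ Aligned X Y := by
  rw [Aligned, unstablePart_smul hc.le, unstablePart_smul hd.le, Matrix.smul_mul, Matrix.mul_smul,
    Matrix.trace_smul, Matrix.trace_smul, smul_eq_mul, smul_eq_mul, mul_pos_iff_of_pos_left hc,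
    mul_pos_iff_of_pos_left hd, Aligned]

lemma isOpen_setOf_aligned : IsOpen {XY : Mat₂ × Mat₂ | Aligned XY.1 XY.2} := by
  have := continuous_unstablePart
  exact isOpen_lt continuous_const (by fun_prop)

lemma eventually_aligned_sub {F : ℝ → Mat₂} (hF : Continuous F) {b : ℝ}
    (hb : (F b).IsHyperbolic) : ∀ᶠ s in 𝓝 0, Aligned (F b) (F (b - s)) := by
  have hcont : Continuous fun s => (F b, F (b - s)) := by fun_prop
  refine hcont.continuousAt.eventually (isOpen_setOf_aligned.mem_nhds ?_)
  simpa using aligned_self hb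

lemma Aligned.trace_unstablePart_mul_pow_pos (h : Aligned X Y) (hX : X.IsHyperbolic)
    (hdet : Y.det = 1) (htr : 2 < Y.trace) (m : ℕ) : 0 < (unstablePart X * Y ^ m).trace := by
  rw [pow_eq_powCoeff_smul (isHyperbolic_of_two_lt_trace hdet htr).le, mul_add, Matrix.mul_smul,
    Matrix.mul_smul, mul_one, Matrix.trace_add, Matrix.trace_smul, Matrix.trace_smul,
    trace_unstablePart]
  exact add_pos_of_nonneg_of_pos (mul_nonneg (powCoeff_nonneg hdet htr m) h.le)
    (mul_pos (pow_pos (eigMin_pos hdet htr) m) (Real.sqrt_pos.2 hX))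

lemma exists_neg_of_recurrence {f : ℕ → ℝ} {T : ℝ} (hT : T < 2) (hzero : 0 < f 0)
    (hrec : ∀ m, f (m + 2) = T * f (m + 1) - f m) : ∃ m, f m < 0 := by
  by_contra! hnonneg
  have hpos : ∀ m, 0 < f m := by
    intro m
    induction m with
    | zero => exact hzero
    | succ k ih =>
      refine (hnonneg (k + 1)).lt_of_ne fun hvanish => ?_
      have hnext := hrec k
      rw [← hvanish] at hnext
      linarith [hnonneg (k + 2)]
  have hratio : ∀ m : ℕ, f (m + 1) / f m ≤ f 1 / f 0 - m * (2 - T) := by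
    intro m
    induction m with
    | zero => simp
    | succ k ih =>
      have hnext : f (k + 1 + 1) / f (k + 1) = T - f k / f (k + 1) := by
        rw [hrec k, sub_div, mul_div_cancel_right₀ _ (hpos (k + 1)).ne']
      have hamgm : 2 ≤ f (k + 1) / f k + f k / f (k + 1) := by
        rw [div_add_div _ _ (hpos k).ne' (hpos _).ne', le_div_iff₀ (mul_pos (hpos k) (hpos _))]
        nlinarith [sq_nonneg (f (k + 1) - f k)]
      push_cast
      linarith
  obtain ⟨m, hm⟩ := exists_nat_gt (f 1 / f 0 / (2 - T))
  rw [div_lt_iff₀ (by linarith)] at hm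
  linarith [hratio m, div_pos (hpos (m + 1)) (hpos m)]

lemma exists_trace_mul_pow_neg (hdet : A.det = 1) (htr : A.trace < 2) (hN : 0 < N.trace) :
    ∃ m : ℕ, (N * A ^ m).trace < 0 := by
  refine exists_neg_of_recurrence (f := fun m => (N * A ^ m).trace) htr (by simpa using hN)
    fun m => ?_
  simp only [pow_add_two_of_det_eq_one hdet, mul_sub, Matrix.mul_smul, Matrix.trace_sub,
    Matrix.trace_smul, smul_eq_mul]

end Alignment

section Asymptotics

variable {A B A₁ A₂ B₁ B₂ : Mat₂}

lemma trace_mul_pow (hA : 0 ≤ A.discr) (B : Mat₂) (n : ℕ) :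
    (B * A ^ n).trace = powCoeff A n * (B * unstablePart A).trace + eigMin A ^ n * B.trace := by
  rw [pow_eq_powCoeff_smul hA, mul_add, Matrix.mul_smul, Matrix.mul_smul, mul_one,
    Matrix.trace_add, Matrix.trace_smul, Matrix.trace_smul, smul_eq_mul, smul_eq_mul]

lemma tendsto_eigMin_pow (hdet : A.det = 1) (htr : 2 < A.trace) :
    Tendsto (fun n => eigMin A ^ n) atTop (𝓝 0) :=
  tendsto_pow_atTop_nhds_zero_of_lt_one (eigMin_pos hdet htr).le (eigMin_lt_one hdet htr)

lemma tendsto_trace_mul_pow_zero (hdet : A.det = 1) (htr : 2 < A.trace)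
    (hBU : (B * unstablePart A).trace = 0) :
    Tendsto (fun n => (B * A ^ n).trace) atTop (𝓝 0) := by
  simp only [trace_mul_pow (isHyperbolic_of_two_lt_trace hdet htr).le, hBU, mul_zero, zero_add]
  simpa using (tendsto_eigMin_pow hdet htr).mul_const B.trace

lemma tendsto_inv_powCoeff_smul_mul_pow (hdet : A.det = 1) (htr : 2 < A.trace) (B : Mat₂) :
    Tendsto (fun n => (powCoeff A n)⁻¹ • (B * A ^ n)) atTop (𝓝 (B * unstablePart A)) := by
  have hcoeff := tendsto_powCoeff_atTop hdet htr
  have hrest : Tendsto (fun n => B * unstablePart A + ((powCoeff A n)⁻¹ * eigMin A ^ n) • B) atTop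
      (𝓝 (B * unstablePart A + (0 * 0 : ℝ) • B)) :=
    ((hcoeff.inv_tendsto_atTop.mul (tendsto_eigMin_pow hdet htr)).smul_const B).const_add _
  rw [mul_zero, zero_smul, add_zero] at hrest
  refine hrest.congr' ?_
  filter_upwards [hcoeff.eventually_gt_atTop 0] with n hn
  rw [pow_eq_powCoeff_smul (isHyperbolic_of_two_lt_trace hdet htr).le, mul_add, Matrix.mul_smul,
    Matrix.mul_smul, mul_one, smul_add, smul_smul, smul_smul, inv_mul_cancel₀ hn.ne', one_smul]

lemma Aligned.eventually_mul_pow (h : Aligned (B₁ * unstablePart A₁) (B₂ * unstablePart A₂))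
    (hdet₁ : A₁.det = 1) (htr₁ : 2 < A₁.trace) (hdet₂ : A₂.det = 1) (htr₂ : 2 < A₂.trace) :
    ∀ᶠ n in atTop, Aligned (B₁ * A₁ ^ n) (B₂ * A₂ ^ n) := by
  have hlim := (tendsto_inv_powCoeff_smul_mul_pow hdet₁ htr₁ B₁).prodMk_nhds
    (tendsto_inv_powCoeff_smul_mul_pow hdet₂ htr₂ B₂)
  filter_upwards [hlim.eventually (isOpen_setOf_aligned.mem_nhds h),
    (tendsto_powCoeff_atTop hdet₁ htr₁).eventually_gt_atTop 0,
    (tendsto_powCoeff_atTop hdet₂ htr₂).eventually_gt_atTop 0] with n hn hpos₁ hpos₂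
  exact (aligned_smul_iff (inv_pos.2 hpos₁) (inv_pos.2 hpos₂)).1 hn

lemma exists_lt_forall_le_of_isCompact {α : Type*} [TopologicalSpace α] {K : Set α}
    (hK : IsCompact K) {f : α → ℝ} (hf : ContinuousOn f K) {c : ℝ} (hc : ∀ x ∈ K, c < f x) :
    ∃ c' > c, ∀ x ∈ K, c' ≤ f x := by
  rcases K.eq_empty_or_nonempty with rfl | hne
  · exact ⟨c + 1, by linarith, by simp⟩
  · obtain ⟨x, hx, hmin⟩ := hK.exists_isMinOn hne hf
    exact ⟨f x, hc x hx, fun y hy => hmin hy⟩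

lemma eventually_forall_lt_trace_mul_pow {α : Type*} [TopologicalSpace α] {K : Set α}
    (hK : IsCompact K) {F G : α → Mat₂} (hF : ContinuousOn F K) (hG : ContinuousOn G K)
    (hdet : ∀ x ∈ K, (F x).det = 1) {q : ℝ} (hq : 1 ≤ q) (htr : ∀ x ∈ K, q + 1 < (F x).trace)
    (hpos : ∀ x ∈ K, 0 < (G x * unstablePart (F x)).trace) (c : ℝ) :
    ∀ᶠ n in atTop, ∀ x ∈ K, c * q ^ n + 1 < (G x * F x ^ n).trace := by
  obtain ⟨ρ, hρ, hFρ⟩ := exists_lt_forall_le_of_isCompact hK (by fun_prop) htr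
  obtain ⟨g, hg, hGg⟩ := exists_lt_forall_le_of_isCompact hK
    (by have := continuous_unstablePart; fun_prop) hpos
  obtain ⟨C, hC⟩ := hK.exists_bound_of_continuousOn (f := fun x => (G x).trace) (by fun_prop)
  have hlittle : (fun n : ℕ => c * q * q ^ n + (1 + C) * 1 ^ n) =o[atTop]
      fun n : ℕ => (ρ - 1) ^ n :=
    ((isLittleO_pow_pow_of_lt_left (by linarith) (by linarith)).const_mul_left _).add
      ((isLittleO_pow_pow_of_lt_left (by linarith) (by linarith)).const_mul_left _)
  rw [← map_add_atTop_eq_nat 1, eventually_map]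
  filter_upwards [hlittle.def (half_pos hg)] with n hn x hx
  have hdetx := hdet x hx
  have htrx : 2 < (F x).trace := by linarith [htr x hx]
  have hpow : (ρ - 1) ^ n ≤ powCoeff (F x) (n + 1) :=
    (pow_le_pow_left₀ (by linarith) (by linarith [trace_sub_one_lt_eigMax hdetx htrx, hFρ x hx])
      n).trans (eigMax_pow_le_powCoeff_succ hdetx htrx n)
  have hmain : (ρ - 1) ^ n * g ≤ powCoeff (F x) (n + 1) * (G x * unstablePart (F x)).trace :=
    mul_le_mul hpow (hGg x hx) hg.le (powCoeff_nonneg hdetx htrx _)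
  have hrest : |eigMin (F x) ^ (n + 1) * (G x).trace| ≤ C := by
    rw [abs_mul, abs_of_pos (pow_pos (eigMin_pos hdetx htrx) _)]
    exact (mul_le_of_le_one_left (abs_nonneg _) (pow_le_one₀ (eigMin_pos hdetx htrx).le
      (eigMin_lt_one hdetx htrx).le)).trans (hC x hx)
  have hρn : 0 < (ρ - 1) ^ n := pow_pos (by linarith) n
  rw [Real.norm_eq_abs, Real.norm_of_nonneg hρn.le, one_pow] at hn
  rw [trace_mul_pow (isHyperbolic_of_two_lt_trace hdetx htrx).le, pow_succ]
  linarith [(abs_le.1 hrest).1, (abs_le.1 hn).2, mul_pos hg hρn]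

end Asymptotics

section HyperbolicWindow

/-- The energies `z < a < b` form a window for the matrix family `F` when `F z` is
elliptic while `F` expands at rate at least `r` on all of `[a, b]`. Alignment at the right end
makes the window reproduce itself under `shiftedProduct F (a - z)`. -/
structure IsHyperbolicWindow (F : ℝ → Mat₂) (r z a b : ℝ) : Prop where
  lt_left : z < a
  left_le : a ≤ b - (a - z)
  abs_trace_lt_two : |(F z).trace| < 2
  lt_trace : ∀ x ∈ Set.Icc a b, r + 1 < (F x).trace
  aligned : Aligned (F b) (F (b - (a - z)))

/-- The transfer matrix over `n + m` periods when the potential is raised by `t` on the last `m`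
of them, `F` being the transfer matrix over one period. -/
def shiftedProduct (F : ℝ → Mat₂) (t : ℝ) (m n : ℕ) (x : ℝ) : Mat₂ := F (x - t) ^ m * F x ^ n

lemma exists_last_zero {f : ℝ → ℝ} (hf : Continuous f) {a b : ℝ} (hab : a ≤ b) (ha : f a < 0)
    (hb : 0 < f b) : ∃ z ∈ Set.Ioo a b, f z = 0 ∧ ∀ x ∈ Set.Ioc z b, 0 < f x := by
  have hcompact : IsCompact (Set.Icc a b ∩ {x | f x ≤ 0}) :=
    isCompact_Icc.inter_right (isClosed_le hf continuous_const)
  obtain ⟨z, ⟨⟨haz, hzb⟩, hfz⟩, hmax⟩ :=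
    hcompact.exists_isGreatest ⟨a, ⟨le_rfl, hab⟩, ha.le⟩
  obtain ⟨y, ⟨hzy, hyb⟩, hfy⟩ := intermediate_value_Icc hzb hf.continuousOn ⟨hfz, hb.le⟩
  have hyz : y = z := le_antisymm (hmax ⟨⟨haz.trans hzy, hyb⟩, hfy.le⟩) hzy
  subst hyz
  refine ⟨y, ⟨haz.lt_of_ne ?_, hzb.lt_of_ne ?_⟩, hfy, fun x hx => ?_⟩
  · rintro rfl; exact ha.ne hfy
  · rintro rfl; exact hb.ne' hfy
  · by_contra! hfx
    exact (hmax ⟨⟨haz.trans hx.1.le, hx.2⟩, hfx⟩).not_gt hx.1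

variable {F : ℝ → Mat₂} {r z a b : ℝ}

namespace IsHyperbolicWindow

lemma two_lt_trace (h : IsHyperbolicWindow F r z a b) (hr : 1 ≤ r) {x : ℝ}
    (hx : x ∈ Set.Icc a b) : 2 < (F x).trace := by
  linarith [h.lt_trace x hx]

lemma lt_right (h : IsHyperbolicWindow F r z a b) : a < b := by
  linarith [h.lt_left, h.left_le]

lemma exists_trace_mul_unstablePart_eq_zero (h : IsHyperbolicWindow F r z a b)
    (hF : Continuous F) (hdet : ∀ x, (F x).det = 1) (hr : 1 ≤ r) :
    ∃ m : ℕ, ∃ z' ∈ Set.Ioo a b, (F (z' - (a - z)) ^ m * unstablePart (F z')).trace = 0 ∧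
      ∀ x ∈ Set.Ioc z' b, 0 < (F (x - (a - z)) ^ m * unstablePart (F x)).trace := by
  have hlt := h.lt_right
  have hyp : ∀ x ∈ Set.Icc a b, (F x).IsHyperbolic := fun x hx =>
    isHyperbolic_of_two_lt_trace (hdet x) (h.two_lt_trace hr hx)
  have hyp_a := hyp a ⟨le_rfl, hlt.le⟩
  have hyp_b := hyp b ⟨hlt.le, le_rfl⟩
  obtain ⟨m, hm⟩ := exists_trace_mul_pow_neg (N := unstablePart (F a)) (hdet z)
    (abs_lt.1 h.abs_trace_lt_two).2 (by rw [trace_unstablePart]; exact Real.sqrt_pos.2 hyp_a)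
  have hshift : b - (a - z) ∈ Set.Icc a b := ⟨h.left_le, by linarith [h.lt_left]⟩
  have hpos := h.aligned.trace_unstablePart_mul_pow_pos hyp_b (hdet _)
    (h.two_lt_trace hr hshift) m
  rw [Matrix.trace_mul_comm] at hm hpos
  have hcont : Continuous fun x => (F (x - (a - z)) ^ m * unstablePart (F x)).trace := by
    have := continuous_unstablePart
    fun_prop
  exact ⟨m, exists_last_zero hcont hlt.le (by rwa [sub_sub_cancel]) hpos⟩

lemma exists_shiftedProduct (h : IsHyperbolicWindow F r z a b) (hF : Continuous F)
    (hdet : ∀ x, (F x).det = 1) (hr : 1 ≤ r) {η : ℝ} (hη : 0 < η) :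
    ∃ (m : ℕ) (z' a' b' : ℝ), a < z' ∧ b' ≤ b ∧ b' ≤ z' + η ∧ ∀ᶠ n in atTop,
      IsHyperbolicWindow (shiftedProduct F (a - z) m n) (r ^ (n + m)) z' a' b' := by
  obtain ⟨m, z', ⟨haz', hz'b⟩, hzero, hpos⟩ :=
    h.exists_trace_mul_unstablePart_eq_zero hF hdet hr
  have hU := continuous_unstablePart
  have htwo : ∀ x, z' ≤ x → x ≤ b → 2 < (F x).trace := fun x hx hxb =>
    h.two_lt_trace hr ⟨haz'.le.trans hx, hxb⟩
  set b' := min b (z' + η)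
  have hb'b : b' ≤ b := min_le_left _ _
  have hz'b' : z' < b' := lt_min hz'b (by linarith)
  have hrankOne : (F (b' - (a - z)) ^ m * unstablePart (F b')).IsHyperbolic := by
    rw [Matrix.IsHyperbolic, Matrix.discr_fin_two, Matrix.det_mul, det_unstablePart
      (isHyperbolic_of_two_lt_trace (hdet b') (htwo b' hz'b'.le hb'b)).le, mul_zero, mul_zero,
      sub_zero]
    exact pow_pos (hpos b' ⟨hz'b', hb'b⟩) 2
  obtain ⟨τ, hal, hτ, hτb'⟩ := ((eventually_aligned_sub
    (F := fun x => F (x - (a - z)) ^ m * unstablePart (F x)) (by fun_prop) hrankOne).filter_mono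
      nhdsWithin_le_nhds |>.and (Ioo_mem_nhdsGT (half_pos (sub_pos.2 hz'b')))).exists
  refine ⟨m, z', z' + τ, b', haz', hb'b, min_le_right _ _, ?_⟩
  filter_upwards [(tendsto_trace_mul_pow_zero (hdet z') (htwo z' le_rfl hz'b.le)
      hzero).abs.eventually_lt_const (by norm_num : |(0 : ℝ)| < 2),
    eventually_forall_lt_trace_mul_pow (isCompact_Icc (a := z' + τ) (b := b'))
      (F := F) (G := fun x => F (x - (a - z)) ^ m) (by fun_prop) (by fun_prop)
      (fun x _ => hdet x) hr (fun x hx => h.lt_trace x ⟨by linarith [hx.1], hx.2.trans hb'b⟩)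
      (fun x hx => hpos x ⟨by linarith [hx.1], hx.2.trans hb'b⟩) (r ^ m),
    hal.eventually_mul_pow (hdet _) (htwo _ hz'b'.le hb'b) (hdet _)
      (htwo _ (by linarith) (by linarith))] with n hell hhyp haln
  refine ⟨by linarith, by linarith, hell, fun x hx => ?_, ?_⟩
  · rw [pow_add, mul_comm (r ^ n)]
    exact hhyp x hx
  · rwa [add_sub_cancel_left]

end IsHyperbolicWindow

end HyperbolicWindow

section TransferMatrix

/-- The one-step transfer matrix, at energy minus potential equal to `x`. -/
def stepMatrix (x : ℝ) : Mat₂ := !![x, -1; 1, 0]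

lemma stepMatrix_eq_quarterTurn_add (x : ℝ) :
    stepMatrix x = quarterTurn + x • Matrix.diagonal ![1, 0] := by
  ext i j
  fin_cases i <;> fin_cases j <;> simp [stepMatrix, quarterTurn]

lemma norm_stepMatrix_le (x : ℝ) : ‖stepMatrix x‖ ≤ 1 + |x| := by
  have hdiag : ‖Matrix.diagonal ![(1 : ℝ), 0]‖ ≤ 1 := by
    rw [Matrix.l2_opNorm_diagonal, pi_norm_le_iff_of_nonneg zero_le_one]
    intro i
    fin_cases i <;> simp
  rw [stepMatrix_eq_quarterTurn_add]
  refine (norm_add_le _ _).trans ?_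
  rw [norm_quarterTurn, norm_smul, Real.norm_eq_abs]
  gcongr
  exact mul_le_of_le_one_right (abs_nonneg x) hdiag

lemma transferMatrix_zero (V : ℤ → ℝ) (E : ℝ) : transferMatrix V E 0 = 1 := by
  simp [transferMatrix]

lemma transferMatrix_succ (V : ℤ → ℝ) (E : ℝ) (N : ℕ) :
    transferMatrix V E (N + 1) = stepMatrix (E - V N) * transferMatrix V E N := by
  -- `transferMatrix` coerces `List.range N` to a list of integers through the list monad.
  have hcoe : ∀ (f : ℤ → Mat₂) (l : List ℕ),
      (List.map f (do let a ← l; pure (a : ℤ))) = List.map (fun a : ℕ => f (a : ℤ)) l := by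
    intro f l
    induction l with
    | nil => rfl
    | cons x l ih => simpa using ih
  unfold transferMatrix stepMatrix
  rw [hcoe, hcoe, List.range_succ_eq_map, List.map_cons, List.prod_cons, List.map_map]
  congr 2
  · simp
  · congr 1
    funext n
    simp only [Function.comp, Nat.cast_succ]
    rw [add_sub_add_right_eq_sub]

variable {V V' : ℤ → ℝ} {E E' : ℝ} {N p : ℕ}

lemma transferMatrix_congr (h : ∀ n : ℕ, n < N → E - V n = E' - V' n) :
    transferMatrix V E N = transferMatrix V' E' N := by
  induction N with
  | zero => rw [transferMatrix_zero, transferMatrix_zero]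
  | succ N ih =>
    rw [transferMatrix_succ, transferMatrix_succ, ih fun n hn => h n (by lia), h N (by lia)]

lemma transferMatrix_add (V : ℤ → ℝ) (E : ℝ) (N K : ℕ) :
    transferMatrix V E (N + K) =
      transferMatrix (fun j => V (j + N)) E K * transferMatrix V E N := by
  induction K with
  | zero => rw [transferMatrix_zero, add_zero, one_mul]
  | succ K ih =>
    rw [← add_assoc, transferMatrix_succ, ih, transferMatrix_succ, mul_assoc, Nat.cast_add,
      add_comm (N : ℤ)]

lemma det_transferMatrix (V : ℤ → ℝ) (E : ℝ) (N : ℕ) : (transferMatrix V E N).det = 1 := by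
  induction N with
  | zero => rw [transferMatrix_zero, Matrix.det_one]
  | succ N ih =>
    rw [transferMatrix_succ, Matrix.det_mul, ih, stepMatrix, Matrix.det_fin_two_of]
    norm_num

lemma analyticAt_transferMatrix (V : ℤ → ℝ) (N : ℕ) (x : ℝ) :
    AnalyticAt ℝ (fun E => transferMatrix V E N) x := by
  induction N with
  | zero => simp only [transferMatrix_zero]; exact analyticAt_const
  | succ N ih =>
    simp only [transferMatrix_succ, stepMatrix_eq_quarterTurn_add]
    exact (by fun_prop : AnalyticAt ℝ _ x).mul ih

lemma continuous_transferMatrix (V : ℤ → ℝ) (N : ℕ) :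
    Continuous fun E => transferMatrix V E N :=
  continuous_iff_continuousAt.2 fun x => (analyticAt_transferMatrix V N x).continuousAt

lemma analyticAt_trace_transferMatrix (V : ℤ → ℝ) (N : ℕ) (x : ℝ) :
    AnalyticAt ℝ (fun E => (transferMatrix V E N).trace) x :=
  ((Matrix.traceLinearMap (Fin 2) ℝ ℝ).toContinuousLinearMap.analyticAt _).comp
    (analyticAt_transferMatrix V N x)

lemma norm_transferMatrix_le {C : ℝ} (hV : ∀ n, |V n| ≤ C) (E : ℝ) (N : ℕ) :
    ‖transferMatrix V E N‖ ≤ (1 + |E| + C) ^ N := by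
  induction N with
  | zero => rw [transferMatrix_zero, pow_zero, norm_one]
  | succ N ih =>
    rw [transferMatrix_succ, pow_succ']
    refine (norm_mul_le _ _).trans (mul_le_mul ((norm_stepMatrix_le _).trans ?_) ih
      (norm_nonneg _) ?_)
    · linarith [abs_sub E (V N), hV N]
    · linarith [abs_nonneg E, (abs_nonneg _).trans (hV 0)]

lemma one_le_norm_transferMatrix (V : ℤ → ℝ) (E : ℝ) (N : ℕ) : 1 ≤ ‖transferMatrix V E N‖ :=
  one_le_norm_of_det_eq_one (det_transferMatrix V E N)

lemma add_mul_period (hV : IsPeriodic V p) (k : ℕ) (n : ℤ) : V (n + (k * p : ℕ)) = V n := by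
  simpa using (show Function.Periodic V (p : ℤ) from hV).nat_mul k n

lemma transferMatrix_mul_period (hV : IsPeriodic V p) (E : ℝ) (k : ℕ) :
    transferMatrix V E (k * p) = transferMatrix V E p ^ k := by
  induction k with
  | zero => rw [zero_mul, transferMatrix_zero, pow_zero]
  | succ k ih =>
    rw [Nat.succ_mul, transferMatrix_add, ih, pow_succ']
    simp only [add_mul_period hV]

end TransferMatrix

section RaisedPotential

/-- For a `p`-periodic `V`, the potential that repeats `n` periods of `V` followed by `m` periods
of `V + t`. -/
noncomputable def raisedPotential (V : ℤ → ℝ) (p n m : ℕ) (t : ℝ) (j : ℤ) : ℝ :=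
  V j + if ((n * p : ℕ) : ℤ) ≤ j % (((n + m) * p : ℕ) : ℤ) then t else 0

variable {V : ℤ → ℝ} {p n m : ℕ} {t : ℝ} {j : ℤ}

lemma isPeriodic_raisedPotential (hV : IsPeriodic V p) (n m : ℕ) (t : ℝ) :
    IsPeriodic (raisedPotential V p n m t) ((n + m) * p) := by
  intro j
  rw [raisedPotential, add_mul_period hV, Int.add_emod_right, raisedPotential]

lemma raisedPotential_of_lt (hj : 0 ≤ j) (hjn : j < (n * p : ℕ)) :
    raisedPotential V p n m t j = V j := by
  have hlt : j < ((n + m) * p : ℕ) := hjn.trans_le (by gcongr; lia)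
  rw [raisedPotential, Int.emod_eq_of_lt hj hlt, if_neg hjn.not_ge, add_zero]

lemma raisedPotential_of_ge (hjn : (n * p : ℕ) ≤ j) (hj : j < ((n + m) * p : ℕ)) :
    raisedPotential V p n m t j = V j + t := by
  rw [raisedPotential, Int.emod_eq_of_lt (by lia) hj, if_pos hjn]

lemma abs_raisedPotential_sub_le (ht : 0 ≤ t) : |raisedPotential V p n m t j - V j| ≤ t := by
  rw [raisedPotential, add_sub_cancel_left]
  split_ifs
  · rw [abs_of_nonneg ht]
  · rwa [abs_zero]

lemma transferMatrix_raisedPotential (hV : IsPeriodic V p) (n m : ℕ) (t E : ℝ) :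
    transferMatrix (raisedPotential V p n m t) E ((n + m) * p) =
      shiftedProduct (fun E => transferMatrix V E p) t m n E := by
  rw [add_mul, transferMatrix_add, shiftedProduct, ← transferMatrix_mul_period hV,
    ← transferMatrix_mul_period hV]
  congr 1
  · refine transferMatrix_congr fun j hj => ?_
    rw [raisedPotential_of_ge (by lia) (by rw [add_mul]; push_cast at hj ⊢; lia),
      add_mul_period hV]
    ring
  · exact transferMatrix_congr fun j hj => by
      rw [raisedPotential_of_lt (by lia) (by exact_mod_cast hj)]

end RaisedPotential

section HighEnergy

variable {V : ℤ → ℝ} {E : ℝ} {N : ℕ}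

lemma transferMatrix_succ_apply_zero (V : ℤ → ℝ) (E : ℝ) (N : ℕ) (j : Fin 2) :
    transferMatrix V E (N + 1) 0 j =
      (E - V N) * transferMatrix V E N 0 j - transferMatrix V E N 1 j := by
  rw [transferMatrix_succ, Matrix.mul_apply, Fin.sum_univ_two]
  simp only [stepMatrix, Matrix.of_apply, Matrix.cons_val', Matrix.cons_val_zero,
    Matrix.cons_val_one, Matrix.cons_val_fin_one]
  ring

lemma transferMatrix_succ_apply_one (V : ℤ → ℝ) (E : ℝ) (N : ℕ) (j : Fin 2) :
    transferMatrix V E (N + 1) 1 j = transferMatrix V E N 0 j := by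
  rw [transferMatrix_succ, Matrix.mul_apply, Fin.sum_univ_two]
  simp [stepMatrix]

lemma transferMatrix_cone (hE : ∀ n : ℕ, n < N + 1 → 4 ≤ E - V n) {s : ℝ} (hs : |s| = 1) :
    let A := transferMatrix V E (N + 1)
    1 ≤ A 1 0 + s * A 1 1 ∧ 3 * (A 1 0 + s * A 1 1) ≤ A 0 0 + s * A 0 1 := by
  have hs' := abs_le.1 hs.le
  simp only [transferMatrix_succ_apply_zero, transferMatrix_succ_apply_one]
  induction N with
  | zero =>
    have hV := hE 0 (by lia)
    simp only [transferMatrix_zero, Matrix.one_apply_eq, Matrix.one_apply_ne, ne_eq, zero_ne_one,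
      one_ne_zero, not_false_eq_true]
    exact ⟨by linarith, by push_cast at hV ⊢; linarith⟩
  | succ N ih =>
    obtain ⟨hlow, hcone⟩ := ih fun n hn => hE n (by lia)
    have hV := hE (N + 1) (by lia)
    simp only [transferMatrix_succ_apply_zero, transferMatrix_succ_apply_one]
    exact ⟨by linarith, by nlinarith⟩

lemma eventually_forall_four_le_sub (V : ℤ → ℝ) (N : ℕ) :
    ∀ᶠ E in atTop, ∀ n : ℕ, n < N → 4 ≤ E - V n := by
  refine ((Set.finite_lt_nat N).eventually_all).2 fun n _ => ?_
  filter_upwards [eventually_ge_atTop (4 + V n)] with E hE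
  linarith

lemma eventually_lower_left_pos (V : ℤ → ℝ) (N : ℕ) :
    ∀ᶠ E in atTop, 0 < transferMatrix V E (N + 1) 1 0 := by
  filter_upwards [eventually_forall_four_le_sub V (N + 1)] with E hE
  have hplus := transferMatrix_cone hE (s := 1) (by simp)
  have hminus := transferMatrix_cone hE (s := -1) (by simp)
  linarith [hplus.1, hminus.1]

lemma eventually_two_lt_trace (V : ℤ → ℝ) (N : ℕ) :
    ∀ᶠ E in atTop, 2 < (transferMatrix V E (N + 1)).trace := by
  filter_upwards [eventually_forall_four_le_sub V (N + 1)] with E hE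
  have hplus := transferMatrix_cone hE (s := 1) (by simp)
  have hminus := transferMatrix_cone hE (s := -1) (by simp)
  rw [Matrix.trace_fin_two]
  linarith [hplus.1, hplus.2, hminus.1, hminus.2]

end HighEnergy

section BaseWindow

/-- The lower left entry of the transfer matrix over `N + 2` sites is the characteristic polynomial
of the Dirichlet block on the first `N + 1` of them. -/
lemma exists_last_dirichlet_eigenvalue (V : ℤ → ℝ) (N : ℕ) :
    ∃ E, 0 < transferMatrix V E (N + 1) 1 0 ∧ transferMatrix V E (N + 2) 1 0 = 0 ∧
      ∀ x > E, 0 < transferMatrix V x (N + 2) 1 0 := by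
  induction N with
  | zero => exact ⟨V 0, by simp [transferMatrix_succ_apply_zero, transferMatrix_succ_apply_one,
      transferMatrix_zero]⟩
  | succ N ih =>
    obtain ⟨E, hprev, hzero, hafter⟩ := ih
    obtain ⟨R, hR⟩ := eventually_atTop.1 (eventually_lower_left_pos V (N + 2))
    have hneg : transferMatrix V E (N + 3) 1 0 < 0 := by
      rw [transferMatrix_succ_apply_one, transferMatrix_succ_apply_zero,
        ← transferMatrix_succ_apply_one V E (N + 1), hzero, mul_zero, zero_sub]
      exact neg_neg_of_pos hprev
    obtain ⟨E', hE', hzero', hafter'⟩ := exists_last_zero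
      ((continuous_transferMatrix V (N + 3)).matrix_elem 1 0) (le_max_left E R) hneg
      (hR _ (le_max_right E R))
    refine ⟨E', hafter E' hE'.1, hzero', fun x hx => ?_⟩
    rcases le_total x (max E R) with hxR | hxR
    · exact hafter' x ⟨hx, hxR⟩
    · exact hR x ((le_max_right E R).trans hxR)

lemma exists_trace_transferMatrix_lt_two (V : ℤ → ℝ) (N : ℕ) :
    ∃ E, (transferMatrix V E (N + 1)).trace < 2 := by
  cases N with
  | zero => exact ⟨V 0, by simp [transferMatrix_succ, transferMatrix_zero, stepMatrix,
      Matrix.trace_fin_two]⟩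
  | succ N =>
    obtain ⟨E, hprev, hzero, -⟩ := exists_last_dirichlet_eigenvalue V N
    refine ⟨E, ?_⟩
    have hdet := det_transferMatrix V E (N + 2)
    rw [Matrix.det_fin_two, hzero, mul_zero, sub_zero] at hdet
    have hneg : transferMatrix V E (N + 2) 0 0 < 0 := by
      rw [transferMatrix_succ_apply_one] at hzero hprev
      rw [transferMatrix_succ_apply_zero, hzero, transferMatrix_succ_apply_one]
      linarith
    rw [Matrix.trace_fin_two]
    nlinarith

lemma exists_upcrossing {f : ℝ → ℝ} (hf : ∀ x, AnalyticAt ℝ f x) {c d e : ℝ} (hed : e ≤ d)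
    (he : f e < c) (hd : c < f d) :
    ∃ x₀, f x₀ = c ∧ (∃ᶠ x in 𝓝[≤] x₀, f x < c) ∧ ∀ᶠ x in 𝓝[>] x₀, c < f x := by
  set S := {x | x ∈ Set.Icc e d ∧ f x < c}
  have hne : S.Nonempty := ⟨e, ⟨le_rfl, hed⟩, he⟩
  have hlub : IsLUB S (sSup S) := isLUB_csSup hne ⟨d, fun x hx => hx.1.2⟩
  have hfreq : ∃ᶠ x in 𝓝[≤] sSup S, f x < c := (hlub.frequently_mem hne).mono fun x hx => hx.2
  have hle : f (sSup S) ≤ c :=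
    le_of_tendsto_of_frequently (hf _).continuousAt.continuousWithinAt
      (hfreq.mono fun x hx => hx.le)
  have hlt : sSup S < d :=
    (hlub.2 fun x hx => hx.1.2).lt_of_ne fun h => (hd.trans_le (h ▸ hle)).false
  have hne_c : ∀ᶠ x in 𝓝[≠] sSup S, f x ≠ c := by
    refine ((hf _).eventually_eq_or_eventually_ne analyticAt_const).resolve_left fun heq => ?_
    exact hfreq ((heq.filter_mono nhdsWithin_le_nhds).mono fun x hx => hx.not_lt)
  have hright : ∀ᶠ x in 𝓝[>] sSup S, c < f x := by
    filter_upwards [hne_c.filter_mono (nhdsWithin_mono _ fun x hx => ne_of_gt hx),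
      Ioo_mem_nhdsGT hlt] with x hx hxd
    refine lt_of_le_of_ne (not_lt.1 fun hxc => hxd.1.not_ge (hlub.1 ⟨⟨?_, hxd.2.le⟩, hxc⟩)) hx.symm
    exact (hlub.1 ⟨⟨le_rfl, hed⟩, he⟩).trans hxd.1.le
  have hge : c ≤ f (sSup S) :=
    ge_of_tendsto (hf _).continuousAt.continuousWithinAt (hright.mono fun x hx => hx.le)
  exact ⟨sSup S, hle.antisymm hge, hfreq, hright⟩

lemma exists_isHyperbolicWindow_of_upcrossing {F : ℝ → Mat₂} (hF : Continuous F)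
    (hdet : ∀ x, (F x).det = 1) {x₀ : ℝ} (hlow : ∃ᶠ x in 𝓝[≤] x₀, |(F x).trace| < 2)
    (hhigh : ∀ᶠ x in 𝓝[>] x₀, 2 < (F x).trace) {η : ℝ} (hη : 0 < η) :
    ∃ r z a b, 1 < r ∧ b ≤ z + η ∧ IsHyperbolicWindow F r z a b := by
  obtain ⟨u, hu, hsub⟩ := mem_nhdsGT_iff_exists_Ioc_subset.1 hhigh
  set b := min u (x₀ + η / 2)
  have hx₀b : x₀ < b := lt_min hu (by linarith)
  have htwo : ∀ x, x₀ < x → x ≤ b → 2 < (F x).trace := fun x hx hxb =>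
    hsub ⟨hx, hxb.trans (min_le_left _ _)⟩
  obtain ⟨τ₀, hτ₀, hal⟩ := Metric.eventually_nhds_iff.1
    (eventually_aligned_sub hF (isHyperbolic_of_two_lt_trace (hdet b) (htwo b hx₀b le_rfl)))
  obtain ⟨τ, hτ, hτmin⟩ :=
    exists_between (lt_min (half_pos hτ₀) (show 0 < (b - x₀) / 3 by linarith))
  obtain ⟨hττ₀, hτb⟩ := lt_min_iff.1 hτmin
  obtain ⟨z, hz, hzτ, hzx₀⟩ := (hlow.and_eventually
    (Ioc_mem_nhdsLE (show x₀ - τ < x₀ by linarith))).exists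
  obtain ⟨ρ, hρ, hFρ⟩ := exists_lt_forall_le_of_isCompact
    (isCompact_Icc (a := x₀ + τ) (b := b)) (f := fun x => (F x).trace) (by fun_prop)
    (fun x hx => htwo x (by linarith [hx.1]) hx.2)
  have hbη : b ≤ x₀ + η / 2 := min_le_right _ _
  refine ⟨ρ / 2, z, x₀ + τ, b, by linarith, by linarith, by linarith, by linarith, hz,
    fun x hx => by linarith [hFρ x hx], hal ?_⟩
  rw [Real.dist_0_eq_abs, abs_of_pos] <;> linarith

lemma exists_isHyperbolicWindow_transferMatrix (V : ℤ → ℝ) {p : ℕ} (hp : 1 ≤ p) {η : ℝ}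
    (hη : 0 < η) :
    ∃ γ z a b, 0 < γ ∧ b ≤ z + η ∧
      IsHyperbolicWindow (fun E => transferMatrix V E p) (Real.exp (γ * p)) z a b := by
  obtain ⟨N, rfl⟩ := Nat.exists_eq_add_of_le' hp
  obtain ⟨e, he⟩ := exists_trace_transferMatrix_lt_two V N
  obtain ⟨d, hd, hed⟩ := ((eventually_two_lt_trace V N).and (eventually_ge_atTop e)).exists
  obtain ⟨x₀, hx₀, hlow, hhigh⟩ :=
    exists_upcrossing (analyticAt_trace_transferMatrix V (N + 1)) hed he hd
  have hgt : ∀ᶠ x in 𝓝[≤] x₀, -2 < (transferMatrix V x (N + 1)).trace :=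
    ((analyticAt_trace_transferMatrix V (N + 1) x₀).continuousAt.eventually_const_lt
      (by linarith)).filter_mono nhdsWithin_le_nhds
  obtain ⟨r, z, a, b, hr, hbz, hw⟩ := exists_isHyperbolicWindow_of_upcrossing
    (continuous_transferMatrix V (N + 1)) (fun x => det_transferMatrix V x _)
    ((hlow.and_eventually hgt).mono fun x hx => abs_lt.2 hx.symm) hhigh hη
  have hN : ((N + 1 : ℕ) : ℝ) ≠ 0 := Nat.cast_ne_zero.2 N.succ_ne_zero
  refine ⟨Real.log r / (N + 1 : ℕ), z, a, b, div_pos (Real.log_pos hr) (by positivity), hbz, ?_⟩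
  rwa [div_mul_cancel₀ _ hN, Real.exp_log (by linarith)]

end BaseWindow

section Stage

lemma isLittleO_pow_of_norm_lt {A : Mat₂} {c : ℝ} (hA : ‖A‖ < c) :
    (fun n => A ^ n) =o[atTop] fun n => c ^ n :=
  (Asymptotics.IsBigO.of_norm_le fun n => norm_pow_le A n).trans_isLittleO
    (isLittleO_pow_pow_of_lt_left (norm_nonneg A) hA)

lemma isLittleO_pow_of_abs_trace_lt_two {A : Mat₂} (hdet : A.det = 1) (htr : |A.trace| < 2)
    {c : ℝ} (hc : 1 < c) : (fun n => A ^ n) =o[atTop] fun n => c ^ n := by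
  refine (pow_isBigO_one_of_abs_trace_lt_two hdet htr).trans_isLittleO ?_
  simpa only [one_pow] using isLittleO_pow_pow_of_lt_left zero_le_one hc

lemma eventually_norm_mul_pow_lt {A : Mat₂} {c : ℝ} (hc : 0 < c)
    (hA : (fun n => A ^ n) =o[atTop] fun n => c ^ n) (B : Mat₂) (m : ℕ) :
    ∀ᶠ n in atTop, ‖B * A ^ n‖ < c ^ (n + m) := by
  have hB : 0 < ‖B‖ + 1 := by positivity
  filter_upwards [hA.def (div_pos (pow_pos hc m) hB)] with n hn
  rw [Real.norm_of_nonneg (pow_nonneg hc.le n)] at hn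
  calc ‖B * A ^ n‖ ≤ ‖B‖ * (c ^ m / (‖B‖ + 1) * c ^ n) :=
        (norm_mul_le _ _).trans (by gcongr)
    _ < (‖B‖ + 1) * (c ^ m / (‖B‖ + 1) * c ^ n) := by
        gcongr
        linarith
    _ = c ^ (n + m) := by
        field_simp
        ring

/-- A stage of the construction, with Lyapunov exponent bounded below by `γ`: a periodic potential,
a window of length at most `scale` in which its transfer matrix over a period expands at rate
`exp (γ * period)`, and a finite set `slow` of pairs (energy, rate) such that the growth at the
energy stays below the rate at this and all later stages. -/
structure Stage (γ : ℝ) where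
  potential : ℤ → ℝ
  period : ℕ
  z : ℝ
  a : ℝ
  b : ℝ
  scale : ℝ
  slow : Set (ℝ × ℝ)
  one_le_period : 1 ≤ period
  isPeriodic : IsPeriodic potential period
  window : IsHyperbolicWindow (fun E => transferMatrix potential E period)
    (Real.exp (γ * period)) z a b
  scale_pos : 0 < scale
  right_le : b ≤ z + scale
  finite_slow : slow.Finite
  norm_lt : ∀ q ∈ slow, ‖transferMatrix potential q.1 period‖ < Real.exp (q.2 * period)

/-- `S.Extends T` says that `T` may follow `S` in the construction: its potential is a small
perturbation agreeing with the one of `S` over a period, its window lies inside the expanding part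
of the window of `S`, and the elliptic energy `S.z` joins the slow ones. -/
structure Stage.Extends {γ : ℝ} (S T : Stage γ) : Prop where
  period_lt : S.period < T.period
  potential_eq : ∀ n : ℤ, 0 ≤ n → n ≤ S.period → T.potential n = S.potential n
  abs_sub_le : ∀ n : ℤ, |T.potential n - S.potential n| ≤ S.scale
  left_lt : S.a < T.z
  right_le : T.b ≤ S.b
  scale_eq : T.scale = S.scale / 2
  slow_eq : T.slow = insert (S.z, S.scale) S.slow

variable {γ : ℝ}

lemma Stage.eventually_norm_shiftedProduct_lt (S : Stage γ) (t : ℝ) (m : ℕ) :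
    ∀ᶠ n in atTop, ∀ q ∈ insert (S.z, S.scale) S.slow,
      ‖shiftedProduct (fun E => transferMatrix S.potential E S.period) t m n q.1‖ <
        Real.exp (q.2 * S.period) ^ (n + m) := by
  refine ((S.finite_slow.insert _).eventually_all).2 fun q hq =>
    eventually_norm_mul_pow_lt (Real.exp_pos _) ?_ _ m
  rcases hq with rfl | hq
  · have hperiod : (0 : ℝ) < S.period := Nat.cast_pos.2 S.one_le_period
    exact isLittleO_pow_of_abs_trace_lt_two (det_transferMatrix _ _ _)
      S.window.abs_trace_lt_two (Real.one_lt_exp_iff.2 (mul_pos S.scale_pos hperiod))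
  · exact isLittleO_pow_of_norm_lt (S.norm_lt q hq)

lemma Stage.exists_extends (hγ : 0 ≤ γ) (S : Stage γ) : ∃ T, S.Extends T := by
  obtain ⟨m, z', a', b', haz', hb'b, hb'z', hwindow⟩ := S.window.exists_shiftedProduct
    (continuous_transferMatrix _ _) (fun x => det_transferMatrix _ x _)
    (Real.one_le_exp (by positivity)) (half_pos S.scale_pos)
  obtain ⟨n, hn, hslow, hwin⟩ := ((eventually_ge_atTop 2).and
    ((S.eventually_norm_shiftedProduct_lt (S.a - S.z) m).and hwindow)).exists
  have hexp : ∀ s : ℝ,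
      Real.exp (s * S.period) ^ (n + m) = Real.exp (s * ((n + m) * S.period : ℕ)) := fun s => by
    rw [← Real.exp_nat_mul]
    push_cast
    ring_nf
  have hp := S.one_le_period
  have hlt : S.period < n * S.period := by nlinarith
  have hperiod : S.period < (n + m) * S.period := by nlinarith
  have ht := S.window.lt_left
  simp only [hexp, ← transferMatrix_raisedPotential S.isPeriodic] at hslow
  rw [hexp] at hwin
  refine ⟨{
      potential := raisedPotential S.potential S.period n m (S.a - S.z)
      period := (n + m) * S.period
      z := z', a := a', b := b'
      scale := S.scale / 2
      slow := insert (S.z, S.scale) S.slow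
      one_le_period := hp.trans hperiod.le
      isPeriodic := isPeriodic_raisedPotential S.isPeriodic n m _
      window := by simpa only [transferMatrix_raisedPotential S.isPeriodic] using hwin
      scale_pos := half_pos S.scale_pos
      right_le := hb'z'
      finite_slow := S.finite_slow.insert _
      norm_lt := hslow },
    hperiod, fun j hj hjp => raisedPotential_of_lt hj (by lia), fun j => ?_, haz', hb'b, rfl, rfl⟩
  have hscale := S.right_le
  exact (abs_raisedPotential_sub_le (by linarith)).trans (by linarith [S.window.lt_right])

lemma exists_stage {W : ℤ → ℝ} {p : ℕ} (hp : 1 ≤ p) (hW : IsPeriodic W p) {η : ℝ} (hη : 0 < η) :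
    ∃ γ > 0, ∃ S : Stage γ, S.potential = W ∧ S.scale = η := by
  obtain ⟨γ, z, a, b, hγ, hbz, hwin⟩ := exists_isHyperbolicWindow_transferMatrix W hp hη
  exact ⟨γ, hγ, ⟨W, p, z, a, b, η, ∅, hp, hW, hwin, hη, hbz, Set.finite_empty, by simp⟩, rfl, rfl⟩

lemma exists_stage_seq (hγ : 0 ≤ γ) (S₀ : Stage γ) :
    ∃ S : ℕ → Stage γ, S 0 = S₀ ∧ ∀ k, (S k).Extends (S (k + 1)) := by
  choose next hnext using Stage.exists_extends hγ
  refine ⟨fun k => next^[k] S₀, rfl, fun k => ?_⟩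
  simp only [Function.iterate_succ_apply']
  exact hnext _

end Stage

section GrowthRate

variable {V : ℤ → ℝ} {E : ℝ} {p : ℕ}

lemma exists_forall_abs_le_of_isPeriodic (hp : 1 ≤ p) (hV : IsPeriodic V p) :
    ∃ C, ∀ n, |V n| ≤ C := by
  refine ⟨∑ i ∈ Finset.range p, |V i|, fun n => ?_⟩
  have hmod : V n = V (n % p) := by
    rw [Int.emod_def, mul_comm]
    exact (Function.Periodic.sub_int_mul_eq hV (n / p)).symm
  obtain ⟨r, hr⟩ := Int.eq_ofNat_of_zero_le (Int.emod_nonneg n (b := p) (by lia))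
  have hrp : r < p := by
    have := Int.emod_lt_of_pos n (b := p) (by lia)
    lia
  rw [hmod, hr]
  exact Finset.single_le_sum (f := fun i : ℕ => |V i|) (fun i _ => abs_nonneg _)
    (Finset.mem_range.2 hrp)

lemma exists_forall_abs_le_of_abs_sub_le {V' : ℤ → ℝ} {c : ℝ} (hp : 1 ≤ p)
    (hV' : IsPeriodic V' p) (hV : ∀ n, |V n - V' n| ≤ c) : ∃ C, ∀ n, |V n| ≤ C := by
  obtain ⟨C, hC⟩ := exists_forall_abs_le_of_isPeriodic hp hV'
  exact ⟨C + c, fun n => by linarith [abs_sub_abs_le_abs_sub (V n) (V' n), hC n, hV n]⟩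

lemma logNormRate_eq (V : ℤ → ℝ) (E : ℝ) (N : ℕ) :
    logNormRate V E N = Real.log ‖transferMatrix V E N‖ / N := by
  rw [logNormRate, opNorm_eq_norm, one_div_mul_eq_div]

lemma logNormRate_nonneg (V : ℤ → ℝ) (E : ℝ) (N : ℕ) : 0 ≤ logNormRate V E N := by
  rw [logNormRate_eq]
  exact div_nonneg (Real.log_nonneg (one_le_norm_transferMatrix V E N)) N.cast_nonneg

lemma logNormRate_le_of_norm_le_exp {N : ℕ} {s : ℝ} (hs : 0 ≤ s)
    (h : ‖transferMatrix V E N‖ ≤ Real.exp (s * N)) : logNormRate V E N ≤ s := by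
  rw [logNormRate_eq]
  refine div_le_of_le_mul₀ N.cast_nonneg hs ?_
  exact (Real.log_le_iff_le_exp (zero_lt_one.trans_le (one_le_norm_transferMatrix V E N))).2 h

lemma isBoundedUnder_ge_logNormRate (V : ℤ → ℝ) (E : ℝ) :
    IsBoundedUnder (· ≥ ·) atTop (logNormRate V E) :=
  isBoundedUnder_of ⟨0, logNormRate_nonneg V E⟩

lemma isBoundedUnder_le_logNormRate {C : ℝ} (hV : ∀ n, |V n| ≤ C) (E : ℝ) :
    IsBoundedUnder (· ≤ ·) atTop (logNormRate V E) := by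
  have hC : 0 ≤ C := (abs_nonneg _).trans (hV 0)
  have hpos : 0 < 1 + |E| + C := by positivity
  refine isBoundedUnder_of ⟨Real.log (1 + |E| + C), fun N => ?_⟩
  refine logNormRate_le_of_norm_le_exp (Real.log_nonneg (by linarith [abs_nonneg E])) ?_
  rw [mul_comm, Real.exp_nat_mul, Real.exp_log hpos]
  exact norm_transferMatrix_le hV E N

lemma liminf_logNormRate_nonneg {C : ℝ} (hV : ∀ n, |V n| ≤ C) (E : ℝ) :
    0 ≤ liminf (logNormRate V E) atTop :=
  le_liminf_of_le (isBoundedUnder_le_logNormRate hV E).isCoboundedUnder_ge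
    (.of_forall (logNormRate_nonneg V E))

lemma le_lyapExp_of_isPeriodic (hp : 1 ≤ p) (hV : IsPeriodic V p) {γ : ℝ} (hγ : 0 ≤ γ)
    (htr : Real.exp (γ * p) + 1 < (transferMatrix V E p).trace) : γ ≤ lyapExp V E := by
  obtain ⟨C, hC⟩ := exists_forall_abs_le_of_isPeriodic hp hV
  refine le_limsup_of_frequently_le ?_ (isBoundedUnder_le_logNormRate hC E)
  have hmul : Tendsto (fun k : ℕ => (k + 1) * p) atTop atTop :=
    (tendsto_add_atTop_nat 1).atTop_mul_const' hp
  refine hmul.frequently (.of_forall fun k => ?_)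
  have hdet := det_transferMatrix V E p
  have htwo : 2 < (transferMatrix V E p).trace := by
    linarith [Real.one_le_exp (show 0 ≤ γ * p by positivity)]
  have hgrowth : Real.exp (γ * p) ^ (k + 1) ≤ ‖transferMatrix V E ((k + 1) * p)‖ := by
    rw [transferMatrix_mul_period hV]
    refine (pow_le_pow_left₀ (Real.exp_nonneg _) ?_ _).trans (eigMax_pow_le_norm_pow hdet htwo _)
    linarith [trace_sub_one_lt_eigMax hdet htwo]
  have hN : (0 : ℝ) < ((k + 1) * p : ℕ) := Nat.cast_pos.2 (by positivity)
  rw [logNormRate_eq, le_div_iff₀ hN, Real.le_log_iff_exp_le (by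
    linarith [one_le_norm_transferMatrix V E ((k + 1) * p)])]
  refine le_trans (le_of_eq ?_) hgrowth
  rw [← Real.exp_nat_mul]
  push_cast
  ring_nf

end GrowthRate

section Limit

lemma liminf_eq_zero_of_frequently_le {α : Type*} {l : Filter α} {f : α → ℝ}
    (hf : ∀ x, 0 ≤ f x) (hfreq : ∀ δ > 0, ∃ᶠ x in l, f x ≤ δ) : liminf f l = 0 := by
  refine le_antisymm (le_of_forall_pos_le_add fun δ hδ => ?_) ?_
  · rw [zero_add]
    exact liminf_le_of_frequently_le (hfreq δ hδ) (isBoundedUnder_of ⟨0, hf⟩)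
  · exact le_liminf_of_le (IsCoboundedUnder.of_frequently_le (hfreq 1 one_pos)) (.of_forall hf)

variable {γ : ℝ} {S : ℕ → Stage γ} {V : ℤ → ℝ} {Estar : ℝ}

lemma scale_eq_div_two_pow (hS : ∀ k, (S k).Extends (S (k + 1))) (k : ℕ) :
    (S k).scale = (S 0).scale / 2 ^ k := by
  induction k with
  | zero => rw [pow_zero, div_one]
  | succ k ih => rw [(hS k).scale_eq, ih, pow_succ, div_div]

lemma tendsto_scale_zero (hS : ∀ k, (S k).Extends (S (k + 1))) :
    Tendsto (fun k => (S k).scale) atTop (𝓝 0) := by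
  rw [funext (scale_eq_div_two_pow hS)]
  exact tendsto_const_nhds.div_atTop (tendsto_pow_atTop_atTop_of_one_lt one_lt_two)

lemma strictMono_period (hS : ∀ k, (S k).Extends (S (k + 1))) :
    StrictMono fun k => (S k).period :=
  strictMono_nat_of_lt_succ fun k => (hS k).period_lt

lemma potential_eq_of_le (hS : ∀ k, (S k).Extends (S (k + 1))) {k j : ℕ} (hkj : k ≤ j) {n : ℤ}
    (hn : 0 ≤ n) (hnp : n ≤ (S k).period) : (S j).potential n = (S k).potential n := by
  induction j, hkj using Nat.le_induction with
  | base => rfl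
  | succ j hkj ih =>
    have hperiod := (strictMono_period hS).monotone hkj
    rw [(hS j).potential_eq n hn (by lia), ih]

lemma exists_limit_potential (hS : ∀ k, (S k).Extends (S (k + 1))) :
    ∃ V : ℤ → ℝ, (∀ k n, |V n - (S k).potential n| ≤ 2 * (S k).scale) ∧
      ∀ k, ∀ n : ℤ, 0 ≤ n → n ≤ (S k).period → V n = (S k).potential n := by
  have hstep : ∀ n k, dist ((S k).potential n) ((S (k + 1)).potential n) ≤
      2 * (S 0).scale / 2 / 2 ^ k := fun n k => by
    rw [dist_comm, Real.dist_eq, mul_div_cancel_left₀ _ two_ne_zero, ← scale_eq_div_two_pow hS]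
    exact (hS k).abs_sub_le n
  choose V hV using fun n => cauchySeq_tendsto_of_complete (cauchySeq_of_le_geometric_two (hstep n))
  refine ⟨V, fun k n => ?_, fun k n hn hnp => ?_⟩
  · rw [← Real.dist_eq, dist_comm, scale_eq_div_two_pow hS, ← mul_div_assoc]
    exact dist_le_of_le_geometric_two_of_tendsto (hstep n) (hV n) k
  · refine tendsto_nhds_unique (hV n) (tendsto_const_nhds.congr' ?_)
    filter_upwards [eventually_ge_atTop k] with j hj
    exact (potential_eq_of_le hS hj hn hnp).symm

lemma exists_forall_abs_sub_le (hS : ∀ k, (S k).Extends (S (k + 1)))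
    (hV : ∀ k n, |V n - (S k).potential n| ≤ 2 * (S k).scale) {δ : ℝ} (hδ : 0 < δ) :
    ∃ K, ∀ k ≥ K, ∀ n, |V n - (S k).potential n| ≤ δ := by
  have hscale := (tendsto_scale_zero hS).eventually_le_const (half_pos hδ)
  obtain ⟨K, hK⟩ := eventually_atTop.1 hscale
  exact ⟨K, fun k hk n => (hV k n).trans (by linarith [hK k hk])⟩

lemma exists_limit_energy (hS : ∀ k, (S k).Extends (S (k + 1))) :
    ∃ Estar, ∀ k, Estar ∈ Set.Icc (S k).a (S k).b := by
  have ha : Monotone fun k => (S k).a := monotone_nat_of_le_succ fun k =>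
    (hS k).left_lt.le.trans (S (k + 1)).window.lt_left.le
  have hb : Antitone fun k => (S k).b := antitone_nat_of_succ_le fun k => (hS k).right_le
  exact ⟨_, Set.mem_iInter.1 (ha.ciSup_mem_iInter_Icc_of_antitone hb fun k =>
    (S k).window.lt_right.le)⟩

lemma tendsto_elliptic_energy (hS : ∀ k, (S k).Extends (S (k + 1)))
    (hE : ∀ k, Estar ∈ Set.Icc (S k).a (S k).b) :
    Tendsto (fun k => (S k).z) atTop (𝓝[≠] Estar) := by
  refine tendsto_nhdsWithin_iff.2 ⟨tendsto_of_tendsto_of_tendsto_of_le_of_le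
    (g := fun k => Estar - (S k).scale) (h := fun _ => Estar) ?_ tendsto_const_nhds ?_ ?_,
    .of_forall fun k => ((S k).window.lt_left.trans_le (hE k).1).ne⟩
  · simpa using (tendsto_scale_zero hS).const_sub Estar
  · intro k
    linarith [(hE k).2, (S k).right_le]
  · exact fun k => ((S k).window.lt_left.trans_le (hE k).1).le

lemma mem_slow_of_lt (hS : ∀ k, (S k).Extends (S (k + 1))) {k j : ℕ} (hkj : k < j) :
    ((S k).z, (S k).scale) ∈ (S j).slow := by
  induction j, hkj using Nat.le_induction with
  | base => rw [(hS k).slow_eq]; exact Set.mem_insert _ _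
  | succ j hkj ih => rw [(hS j).slow_eq]; exact Set.mem_insert_of_mem _ ih

lemma liminf_logNormRate_elliptic_energy_le (hS : ∀ k, (S k).Extends (S (k + 1)))
    (hV : ∀ k, ∀ n : ℤ, 0 ≤ n → n ≤ (S k).period → V n = (S k).potential n) (k : ℕ) :
    liminf (logNormRate V (S k).z) atTop ≤ (S k).scale := by
  refine liminf_le_of_frequently_le ?_ (isBoundedUnder_ge_logNormRate V _)
  refine (strictMono_period hS).tendsto_atTop.frequently (Eventually.frequently ?_)
  filter_upwards [eventually_gt_atTop k] with j hj
  refine logNormRate_le_of_norm_le_exp (S k).scale_pos.le ?_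
  rw [transferMatrix_congr (V' := (S j).potential) (E' := (S k).z) fun n hn => by
    rw [hV j n (by lia) (by lia)]]
  exact ((S j).norm_lt _ (mem_slow_of_lt hS hj)).le

lemma liminf_liminf_logNormRate_eq_zero (hS : ∀ k, (S k).Extends (S (k + 1)))
    (hV : ∀ k, ∀ n : ℤ, 0 ≤ n → n ≤ (S k).period → V n = (S k).potential n) {C : ℝ}
    (hC : ∀ n, |V n| ≤ C) (hE : ∀ k, Estar ∈ Set.Icc (S k).a (S k).b) :
    liminf (fun E => liminf (logNormRate V E) atTop) (𝓝[≠] Estar) = 0 := by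
  refine liminf_eq_zero_of_frequently_le (liminf_logNormRate_nonneg hC) fun δ hδ => ?_
  refine (tendsto_elliptic_energy hS hE).frequently (Eventually.frequently ?_)
  filter_upwards [(tendsto_scale_zero hS).eventually_le_const hδ] with k hk
  exact (liminf_logNormRate_elliptic_energy_le hS hV k).trans hk

end Limit

end LimitPeriodic

/-- limit-periodic potentials with a discontinuity of the Lyapunov
exponent are dense in the space of limit-periodic potentials. -/
theorem statement17 (W : ℤ → ℝ) (hW : IsLimitPeriodic W) (ε : ℝ) (hε : 0 < ε) :
    ∃ (V : ℤ → ℝ) (Estar γ : ℝ) (Vk : ℕ → ℤ → ℝ) (p : ℕ → ℕ),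
      IsLimitPeriodic V ∧ (∀ n : ℤ, |V n - W n| ≤ ε) ∧ 0 < γ ∧
      StrictMono p ∧ (∀ k, 1 ≤ p k) ∧ (∀ k, IsPeriodic (Vk k) (p k)) ∧
      (∀ k, ∀ n : ℤ, 0 ≤ n → n ≤ (p k : ℤ) → V n = Vk k n) ∧
      (∀ δ > (0 : ℝ), ∃ K : ℕ, ∀ k ≥ K, ∀ n : ℤ, |V n - Vk k n| ≤ δ) ∧
      (∀ k, γ ≤ lyapExp (Vk k) Estar) ∧
      Filter.liminf
        (fun E : ℝ => Filter.liminf (fun N : ℕ => logNormRate V E N) Filter.atTop)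
        (nhdsWithin Estar {Estar}ᶜ) = 0 := by
  obtain ⟨Wk, pk, hper, hlim⟩ := hW
  obtain ⟨K, hK⟩ := hlim (ε / 2) (by linarith)
  obtain ⟨γ, hγ, S₀, hS₀, hscale⟩ :=
    LimitPeriodic.exists_stage (hper K).1 (hper K).2 (η := ε / 4) (by linarith)
  obtain ⟨S, rfl, hS⟩ := LimitPeriodic.exists_stage_seq hγ.le S₀
  obtain ⟨V, hdist, heq⟩ := LimitPeriodic.exists_limit_potential hS
  obtain ⟨Estar, hE⟩ := LimitPeriodic.exists_limit_energy hS
  have hVk := fun δ (hδ : δ > 0) => LimitPeriodic.exists_forall_abs_sub_le hS hdist hδ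
  have hVW : ∀ n, |V n - W n| ≤ ε := fun n => by
    have hV := hdist 0 n
    rw [hS₀, hscale] at hV
    have hW := hK K le_rfl n
    rw [abs_sub_comm] at hW
    linarith [abs_sub_le (V n) (Wk K n) (W n)]
  obtain ⟨C, hC⟩ := LimitPeriodic.exists_forall_abs_le_of_abs_sub_le
    (S 0).one_le_period (S 0).isPeriodic (hdist 0)
  have hlyap : ∀ k, γ ≤ lyapExp (S k).potential Estar := fun k =>
    LimitPeriodic.le_lyapExp_of_isPeriodic (S k).one_le_period (S k).isPeriodic hγ.le
      ((S k).window.lt_trace Estar (hE k))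
  exact ⟨V, Estar, γ, fun k => (S k).potential, fun k => (S k).period,
    ⟨_, _, fun k => ⟨(S k).one_le_period, (S k).isPeriodic⟩, hVk⟩, hVW, hγ,
    LimitPeriodic.strictMono_period hS, fun k => (S k).one_le_period, fun k => (S k).isPeriodic,
    heq, hVk, hlyap, LimitPeriodic.liminf_liminf_logNormRate_eq_zero hS heq hC hE⟩
end

section
/- There exist a bounded limit-periodic potential V : ℤ → ℝ and a Schrödinger operator H with potential V such that for every E ∈ [−4,4], the complex number E belongs to σ(H); in particular, there is a limit-periodic potential whose Schrödinger operator has spectrum containing an interval. -/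
open Filter Matrix

/-!
Suppose `V` is periodic and every energy in a bounded set `S` lies within `ε` of the spectrum of its
Schrödinger operator. Take a finite `δ / 2`-net of energies `E i` in `S`, together with spectral
values `y i` such that `|E i - y i| ≤ ε` and finitely supported approximate eigenfunctions for them.
Translating these functions by suitable multiples of the period puts them in disjoint blocks, on
each of which the potential may be raised by its own constant `E i - y i`. A periodic perturbation
of size at most `ε` therefore turns them into approximate eigenfunctions for the `E i`, and brings
all of `S` within `δ` of the spectrum, however small `δ` is compared with `ε`. Iterating with
geometrically decreasing `ε` gives a uniformly convergent sequence of periodic potentials. Since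
the distance from a point to the spectrum is a `1`-Lipschitz function of a normal operator, the
spectrum of the limit operator contains `S`.
-/

open Metric Set
open scoped lp ENNReal

section Iteration

theorem exists_mem_closure_forall_nonpos {X ι : Type*} [PseudoMetricSpace X] [CompleteSpace X]
    {D : Set X} {f : ι → X → ℝ} (hf : ∀ i, Continuous (f i)) {x₀ : X} (hx₀ : x₀ ∈ D) {ε₀ : ℝ}
    (hε₀ : 0 < ε₀) (hfx₀ : ∀ i, f i x₀ ≤ ε₀)
    (step : ∀ ε > 0, ∀ x ∈ D, (∀ i, f i x ≤ ε) →
      ∃ y ∈ D, dist x y ≤ ε ∧ ∀ i, f i y ≤ ε / 2) :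
    ∃ x ∈ closure D, ∀ i, f i x ≤ 0 := by
  let ε : ℕ → ℝ := fun k => ε₀ * (1 / 2) ^ k
  have hstep : ∀ k x, ∃ y, x ∈ D ∧ (∀ i, f i x ≤ ε k) →
      dist x y ≤ ε k ∧ y ∈ D ∧ ∀ i, f i y ≤ ε (k + 1) := fun k x => by
    by_cases hx : x ∈ D ∧ ∀ i, f i x ≤ ε k
    · obtain ⟨y, hyD, hxy, hy⟩ := step (ε k) (by positivity) x hx.1 hx.2
      have hε : ε (k + 1) = ε k / 2 := by simp only [ε]; ring
      exact ⟨y, fun _ => ⟨hxy, hyD, by rwa [hε]⟩⟩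
    · exact ⟨x, fun h => absurd h hx⟩
  choose next hnext using hstep
  let x : ℕ → X := fun k => Nat.rec x₀ next k
  have hx : ∀ k, x k ∈ D ∧ ∀ i, f i (x k) ≤ ε k := fun k => by
    induction k with
    | zero => simpa [ε, x] using ⟨hx₀, hfx₀⟩
    | succ k ih => exact (hnext k _ ih).2
  have hcauchy : CauchySeq x := cauchySeq_of_le_geometric (1 / 2) ε₀ (by norm_num) fun k =>
    (hnext k _ (hx k)).1
  obtain ⟨a, ha⟩ := cauchySeq_tendsto_of_complete hcauchy
  have hε : Tendsto ε atTop (nhds 0) := by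
    simpa only [mul_zero] using (tendsto_pow_atTop_nhds_zero_of_lt_one
      (by norm_num : (0 : ℝ) ≤ 1 / 2) (by norm_num)).const_mul ε₀
  exact ⟨a, mem_closure_of_tendsto ha (.of_forall fun k => (hx k).1), fun i =>
    le_of_tendsto_of_tendsto' (((hf i).tendsto a).comp ha) hε fun k => (hx k).2 i⟩

end Iteration

section CStarAlgebra

variable {A : Type*} [CStarAlgebra A]

theorem norm_resolvent_le_inv_infDist_spectrum {a : A} (ha : IsStarNormal a) {z : ℂ}
    (hz : z ∉ spectrum ℂ a) : ‖resolvent a z‖ ≤ (infDist z (spectrum ℂ a))⁻¹ := by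
  have hne : ∀ w ∈ spectrum ℂ a, z - w ≠ 0 := fun w hw h => hz (sub_eq_zero.1 h ▸ hw)
  have hcfc : resolvent a z = cfc (fun w => (z - w)⁻¹) a := by
    rw [cfc_inv (fun w => z - w) a hne, cfc_sub _ _ a, cfc_const z a, cfc_id' ℂ a, resolvent]
  rw [hcfc]
  refine norm_cfc_le (inv_nonneg.2 infDist_nonneg) fun w hw => ?_
  rw [norm_inv, ← dist_eq_norm]
  have hpos := ((spectrum.isClosed a).notMem_iff_infDist_pos ⟨w, hw⟩).1 hz
  exact inv_anti₀ hpos (infDist_le_dist_of_mem hw)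

theorem infDist_spectrum_le_norm_sub {a b : A} (ha : IsStarNormal a) {z : ℂ}
    (hz : z ∈ spectrum ℂ b) : infDist z (spectrum ℂ a) ≤ ‖a - b‖ := by
  nontriviality A
  by_contra! hlt
  have hpos : 0 < infDist z (spectrum ℂ a) := (norm_nonneg _).trans_lt hlt
  have hza : z ∉ spectrum ℂ a := fun h => hpos.ne' (infDist_zero_of_mem h)
  obtain ⟨u, hu⟩ := spectrum.notMem_iff.1 hza
  have hinv : ‖(↑u⁻¹ : A)‖ ≤ (infDist z (spectrum ℂ a))⁻¹ := by
    simpa only [resolvent, ← hu, Ring.inverse_unit] using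
      norm_resolvent_le_inv_infDist_spectrum ha hza
  have hnear : ‖algebraMap ℂ A z - b - u‖ < ‖(↑u⁻¹ : A)‖⁻¹ := by
    rw [hu, sub_sub_sub_cancel_left]
    exact hlt.trans_le (le_inv_of_le_inv₀ (Units.norm_pos _) hinv)
  exact spectrum.notMem_iff.2 (u.ofNearby _ hnear).isUnit hz

theorem lipschitzOnWith_infDist_spectrum (z : ℂ) :
    LipschitzOnWith 1 (fun a : A => infDist z (spectrum ℂ a)) {a | IsStarNormal a} := by
  refine LipschitzOnWith.of_le_add fun a ha b _ => ?_
  nontriviality A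
  obtain ⟨w, hw, hzw⟩ := (spectrum.isCompact b).exists_infDist_eq_dist (spectrum.nonempty b) z
  calc infDist z (spectrum ℂ a)
      ≤ infDist w (spectrum ℂ a) + dist z w := infDist_le_infDist_add_dist
    _ ≤ dist a b + infDist z (spectrum ℂ b) := by
        rw [hzw, dist_eq_norm a b]
        gcongr
        exact infDist_spectrum_le_norm_sub ha hw
    _ = infDist z (spectrum ℂ b) + dist a b := add_comm _ _

theorem exists_real_mem_spectrum_dist_eq_infDist [Nontrivial A] {a : A} (ha : IsSelfAdjoint a)
    (x : ℝ) : ∃ y : ℝ, (y : ℂ) ∈ spectrum ℂ a ∧ dist x y = infDist (x : ℂ) (spectrum ℂ a) := by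
  obtain ⟨w, hw, hxw⟩ := (spectrum.isCompact a).exists_infDist_eq_dist (spectrum.nonempty a) (x : ℂ)
  have hre : w = w.re := ha.mem_spectrum_eq_re hw
  rw [hre] at hw hxw
  exact ⟨w.re, hw, by rw [hxw, Complex.isometry_ofReal.dist_eq]⟩

end CStarAlgebra

section HilbertSpace

variable {F : Type*} [NormedAddCommGroup F] [InnerProductSpace ℂ F] [CompleteSpace F]

theorem infDist_spectrum_mul_norm_le {T : F →L[ℂ] F} (hT : IsStarNormal T) (z : ℂ) (ψ : F) :
    infDist z (spectrum ℂ T) * ‖ψ‖ ≤ ‖T ψ - z • ψ‖ := by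
  by_cases hz : z ∈ spectrum ℂ T
  · simp [infDist_zero_of_mem hz]
  have hψ : ψ = resolvent T z (z • ψ - T ψ) := by
    have hmul := Ring.inverse_mul_cancel _ (spectrum.notMem_iff.1 hz)
    simpa [Algebra.algebraMap_eq_smul_one, resolvent] using (congrArg (· ψ) hmul).symm
  rcases (infDist_nonneg (x := z) (s := spectrum ℂ T)).eq_or_lt with h0 | hpos
  · simp [← h0]
  rw [norm_sub_rev, ← le_inv_mul_iff₀ hpos]
  calc ‖ψ‖ = ‖resolvent T z (z • ψ - T ψ)‖ := congrArg norm hψ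
    _ ≤ (infDist z (spectrum ℂ T))⁻¹ * ‖z • ψ - T ψ‖ :=
        ContinuousLinearMap.le_of_opNorm_le _ (norm_resolvent_le_inv_infDist_spectrum hT hz) _

theorem isUnit_of_isStarNormal_of_bound {T : F →L[ℂ] F} (hT : IsStarNormal T) {δ : ℝ}
    (hδ : 0 < δ) (h : ∀ ψ, δ * ‖ψ‖ ≤ ‖T ψ‖) : IsUnit T := by
  have hanti : AntilipschitzWith δ⁻¹.toNNReal T := T.antilipschitz_of_bound fun ψ => by
    rw [Real.coe_toNNReal _ (by positivity), le_inv_mul_iff₀ hδ]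
    exact h ψ
  rw [ContinuousLinearMap.isUnit_iff_bijective,
    ContinuousLinearMap.bijective_iff_dense_range_and_antilipschitz,
    Submodule.topologicalClosure_eq_top_iff, ContinuousLinearMap.IsStarNormal.orthogonal_range hT]
  exact ⟨LinearMap.ker_eq_bot.2 hanti.injective, _, hanti⟩

theorem exists_mem_norm_sub_smul_lt_of_mem_spectrum {T : F →L[ℂ] F} (hT : IsStarNormal T) {z : ℂ}
    (hz : z ∈ spectrum ℂ T) {δ : ℝ} (hδ : 0 < δ) {D : Set F} (hD : Dense D) :
    ∃ ψ ∈ D, ‖T ψ - z • ψ‖ < δ * ‖ψ‖ := by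
  have hopen : IsOpen {ψ : F | ‖T ψ - z • ψ‖ < δ * ‖ψ‖} := isOpen_lt (by fun_prop) (by fun_prop)
  refine hD.exists_mem_open hopen ?_
  by_contra hempty
  have hbound : ∀ ψ, δ * ‖ψ‖ ≤ ‖(algebraMap ℂ (F →L[ℂ] F) z - T) ψ‖ := fun ψ => by
    have hψ : ¬ ‖T ψ - z • ψ‖ < δ * ‖ψ‖ := fun h => hempty ⟨ψ, h⟩
    simpa [Algebra.algebraMap_eq_smul_one, norm_sub_rev] using hψ
  have hnormal : IsStarNormal (algebraMap ℂ (F →L[ℂ] F) z - T) := by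
    rw [isStarNormal_iff, star_sub, ← algebraMap_star_comm]
    exact (Algebra.commute_algebraMap_left _ _).sub_left
      ((Algebra.commute_algebraMap_right _ _).sub_right hT.star_comm_self)
  exact spectrum.notMem_iff.2 (isUnit_of_isStarNormal_of_bound hnormal hδ hbound) hz

end HilbertSpace

section Ell2

variable {ι κ : Type*}

theorem memℓp_comp_injective {E : Type*} [NormedAddCommGroup E] {p : ℝ≥0∞} (hp : 0 < p.toReal)
    {f : κ → E} (hf : Memℓp f p) {g : ι → κ} (hg : Function.Injective g) : Memℓp (f ∘ g) p :=
  memℓp_gen ((hf.summable hp).comp_injective hg)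

/-- Pulling back along a bijection of index sets, as a unitary map of `ℓ²` spaces. -/
noncomputable def ell2Reindex (e : ι ≃ κ) : ℓ²(κ, ℂ) ≃ₗᵢ[ℂ] ℓ²(ι, ℂ) where
  toFun ψ := ⟨ψ ∘ e, memℓp_comp_injective (by norm_num) (lp.memℓp ψ) e.injective⟩
  invFun φ := ⟨φ ∘ e.symm, memℓp_comp_injective (by norm_num) (lp.memℓp φ) e.symm.injective⟩
  left_inv ψ := by ext; simp
  right_inv φ := by ext; simp
  map_add' _ _ := rfl
  map_smul' _ _ := rfl
  norm_map' ψ := by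
    rw [lp.norm_eq_tsum_rpow (by norm_num), lp.norm_eq_tsum_rpow (by norm_num)]
    exact congrArg (· ^ _) (e.tsum_eq fun k => ‖ψ k‖ ^ (2 : ℝ≥0∞).toReal)

@[simp]
theorem ell2Reindex_apply (e : ι ≃ κ) (ψ : ℓ²(κ, ℂ)) (i : ι) : ell2Reindex e ψ i = ψ (e i) := rfl

/-- Multiplication by a bounded real-valued function, as an operator on `ℓ²`. -/
noncomputable def mulOp (V : ℓ^∞(ι, ℝ)) : ℓ²(ι, ℂ) →L[ℂ] ℓ²(ι, ℂ) :=
  lp.mapCLM 2 (fun i => (V i : ℂ) • ContinuousLinearMap.id ℂ ℂ) (norm_nonneg V) fun i => by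
    simpa [norm_smul] using lp.norm_apply_le_norm ENNReal.top_ne_zero V i

@[simp]
theorem mulOp_apply (V : ℓ^∞(ι, ℝ)) (ψ : ℓ²(ι, ℂ)) (i : ι) : mulOp V ψ i = V i * ψ i := rfl

theorem norm_mulOp_le (V : ℓ^∞(ι, ℝ)) : ‖mulOp V‖ ≤ ‖V‖ := lp.norm_mapCLM_le ..

theorem mulOp_sub (V W : ℓ^∞(ι, ℝ)) : mulOp (V - W) = mulOp V - mulOp W := by
  ext ψ i
  simp [sub_mul]

theorem isSelfAdjoint_mulOp (V : ℓ^∞(ι, ℝ)) : IsSelfAdjoint (mulOp V) := by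
  rw [ContinuousLinearMap.isSelfAdjoint_iff_isSymmetric]
  intro φ ψ
  simp [lp.inner_eq_tsum, mul_left_comm, mul_assoc]

theorem dense_setOf_finite_support {E : Type*} [NormedAddCommGroup E] {p : ℝ≥0∞}
    [Fact (1 ≤ p)] (hp : p ≠ ∞) :
    Dense {f : lp (fun _ : ι => E) p | (Function.support f).Finite} := by
  classical
  intro f
  refine mem_closure_of_tendsto (lp.hasSum_single hp f) (.of_forall fun s => ?_)
  refine s.finite_toSet.subset fun i hi => ?_
  by_contra his
  refine hi ?_
  rw [lp.coeFn_sum, Finset.sum_apply]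
  exact Finset.sum_eq_zero fun j hj => lp.single_apply_ne _ _ _ fun hij => his (hij ▸ hj)

instance nontrivial_ell2 [Nonempty ι] : Nontrivial (ℓ²(ι, ℂ)) := by
  classical
  obtain ⟨i⟩ := ‹Nonempty ι›
  refine ⟨lp.single 2 i 1, 0, fun h => ?_⟩
  simpa using congrArg (· i) h

end Ell2

section Schrodinger

/-- The discrete Schrödinger operator with bounded potential `V`, written as the sum of the left
shift, its adjoint, and multiplication by `V`. -/
noncomputable def schrodingerOp (V : ℓ^∞(ℤ, ℝ)) : ℓ²(ℤ, ℂ) →L[ℂ] ℓ²(ℤ, ℂ) :=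
  (ell2Reindex (Equiv.addRight (1 : ℤ)) : ℓ²(ℤ, ℂ) →L[ℂ] ℓ²(ℤ, ℂ)) +
    ((ell2Reindex (Equiv.addRight (1 : ℤ))).symm : ℓ²(ℤ, ℂ) →L[ℂ] ℓ²(ℤ, ℂ)) + mulOp V

theorem schrodingerOp_apply (V : ℓ^∞(ℤ, ℝ)) (ψ : ℓ²(ℤ, ℂ)) (n : ℤ) :
    schrodingerOp V ψ n = ψ (n + 1) + ψ (n - 1) + V n * ψ n := rfl

theorem isSchrodingerOp_schrodingerOp (V : ℓ^∞(ℤ, ℝ)) : IsSchrodingerOp V (schrodingerOp V) :=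
  schrodingerOp_apply V

theorem isSelfAdjoint_schrodingerOp (V : ℓ^∞(ℤ, ℝ)) : IsSelfAdjoint (schrodingerOp V) := by
  rw [schrodingerOp, ← LinearIsometryEquiv.star_eq_symm]
  exact (IsSelfAdjoint.add_star_self _).add (isSelfAdjoint_mulOp V)

theorem norm_schrodingerOp_sub_le (V W : ℓ^∞(ℤ, ℝ)) :
    ‖schrodingerOp V - schrodingerOp W‖ ≤ ‖V - W‖ := by
  simpa only [schrodingerOp, add_sub_add_left_eq_sub, mulOp_sub] using norm_mulOp_le (V - W)

theorem continuous_infDist_spectrum_schrodingerOp (z : ℂ) :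
    Continuous fun V => infDist z (spectrum ℂ (schrodingerOp V)) := by
  have hop : LipschitzWith 1 schrodingerOp :=
    LipschitzWith.mk_one fun V W => by
      simpa only [dist_eq_norm] using norm_schrodingerOp_sub_le V W
  exact (lipschitzOnWith_infDist_spectrum z).continuousOn.comp_continuous hop.continuous
    fun V => (isSelfAdjoint_schrodingerOp V).isStarNormal

theorem schrodingerOp_translate {V V' : ℓ^∞(ℤ, ℝ)} {ψ : ℓ²(ℤ, ℂ)} {s : ℤ} {c : ℝ}
    (hV : ∀ n, ψ n ≠ 0 → V' (n + s) = V n + c) :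
    schrodingerOp V' (ell2Reindex (Equiv.subRight s) ψ) =
      ell2Reindex (Equiv.subRight s) (schrodingerOp V ψ + (c : ℂ) • ψ) := by
  ext n
  have hn : (V' n : ℂ) * ψ (n - s) = (V (n - s) + c) * ψ (n - s) := by
    by_cases h : ψ (n - s) = 0
    · simp only [h, mul_zero]
    · have := hV _ h
      rw [sub_add_cancel] at this
      rw [this, Complex.ofReal_add]
  simp only [schrodingerOp_apply, ell2Reindex_apply, Equiv.subRight_apply, lp.coeFn_add,
    lp.coeFn_smul, Pi.add_apply, Pi.smul_apply, smul_eq_mul, hn]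
  rw [add_sub_right_comm, sub_right_comm]
  ring

theorem infDist_spectrum_schrodingerOp_le_of_translate {V V' : ℓ^∞(ℤ, ℝ)} {ψ : ℓ²(ℤ, ℂ)} {s : ℤ}
    {c y δ : ℝ} (hV : ∀ n, ψ n ≠ 0 → V' (n + s) = V n + c)
    (hψ : ‖schrodingerOp V ψ - (y : ℂ) • ψ‖ < δ * ‖ψ‖) :
    infDist ((y + c : ℝ) : ℂ) (spectrum ℂ (schrodingerOp V')) ≤ δ := by
  have hψ0 : 0 < ‖ψ‖ := norm_pos_iff.2 fun h => by simp [h] at hψ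
  refine le_of_mul_le_mul_right ?_ hψ0
  let φ := ell2Reindex (Equiv.subRight s) ψ
  have hφ : schrodingerOp V' φ - ((y + c : ℝ) : ℂ) • φ =
      ell2Reindex (Equiv.subRight s) (schrodingerOp V ψ - (y : ℂ) • ψ) := by
    rw [schrodingerOp_translate hV, ← map_smul, ← map_sub, Complex.ofReal_add, add_smul]
    congr 1
    abel
  calc infDist ((y + c : ℝ) : ℂ) (spectrum ℂ (schrodingerOp V')) * ‖ψ‖
      = infDist ((y + c : ℝ) : ℂ) (spectrum ℂ (schrodingerOp V')) * ‖φ‖ := by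
        rw [LinearIsometryEquiv.norm_map]
    _ ≤ ‖schrodingerOp V' φ - ((y + c : ℝ) : ℂ) • φ‖ :=
        infDist_spectrum_mul_norm_le (isSelfAdjoint_schrodingerOp V').isStarNormal _ φ
    _ = ‖schrodingerOp V ψ - (y : ℂ) • ψ‖ := by rw [hφ, LinearIsometryEquiv.norm_map]
    _ ≤ δ * ‖ψ‖ := hψ.le

end Schrodinger

section Periodic

theorem IsPeriodic.periodic_of_dvd {V : ℤ → ℝ} {p : ℕ} (hV : IsPeriodic V p) {s : ℤ}
    (hs : (p : ℤ) ∣ s) : Function.Periodic V s := by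
  obtain ⟨k, rfl⟩ := hs
  rw [mul_comm]
  exact Function.Periodic.int_mul hV k

theorem exists_periodic_plateaus {ι : Type*} [Finite ι] {c : ι → ℝ} {ε : ℝ} (hε : 0 ≤ ε)
    (hc : ∀ i, |c i| ≤ ε) {p : ℕ} (hp : 1 ≤ p) {K : Set ℤ} (hK : K.Finite) :
    ∃ (W : ℤ → ℝ) (q : ℕ), 1 ≤ q ∧ p ∣ q ∧ IsPeriodic W q ∧ (∀ n, |W n| ≤ ε) ∧
      ∀ i, ∃ s : ℤ, (p : ℤ) ∣ s ∧ ∀ n ∈ K, W (n + s) = c i := by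
  have := Fintype.ofFinite ι
  rcases isEmpty_or_nonempty ι with hι | hι
  · exact ⟨0, p, hp, dvd_rfl, fun _ => rfl, fun _ => by simpa using hε, isEmptyElim⟩
  obtain ⟨R, hR⟩ := (hK.image Int.natAbs).bddAbove
  have hKR : ∀ n ∈ K, |n| ≤ R := fun n hn => by
    rw [Int.abs_eq_natAbs]
    exact_mod_cast hR (mem_image_of_mem _ hn)
  -- `W` is constant on consecutive blocks of length `L`, on which it runs cyclically through the
  -- values `c i`; a block is long enough to hold a translate of `K` by a multiple of `p`.
  let N := Fintype.card ι
  have : NeZero N := ⟨Fintype.card_ne_zero⟩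
  let e : ZMod N ≃ ι := Fintype.equivOfCardEq (ZMod.card N)
  let L := p * (2 * R + 1)
  have hL : (0 : ℤ) < L := by positivity
  have hpR : (R : ℤ) ≤ p * R := le_mul_of_one_le_left (by positivity) (by exact_mod_cast hp)
  have hLR : (2 * (p * R) : ℤ) < L := by simp only [L]; push_cast; linarith
  refine ⟨fun n => c (e ((n / L : ℤ) : ZMod N)), L * N, Nat.mul_pos (by positivity) (by positivity),
    ⟨(2 * R + 1) * N, mul_assoc ..⟩, fun n => ?_, fun n => hc _, fun i => ?_⟩
  · simp [Int.add_mul_ediv_left _ _ hL.ne']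
  · obtain ⟨j, hj⟩ := ZMod.intCast_surjective (e.symm i)
    refine ⟨L * j + p * R, ⟨(2 * R + 1) * j + R, by simp only [L]; push_cast; ring⟩, fun n hn => ?_⟩
    have hn' := abs_le.1 (hKR n hn)
    have hdiv : (n + (L * j + p * R)) / (L : ℤ) = j := by
      rw [show n + (L * j + p * R) = n + p * R + L * j by ring, Int.add_mul_ediv_left _ _ hL.ne',
        Int.ediv_eq_zero_of_lt (by linarith) (by linarith), zero_add]
    simp [hdiv, hj]

end Periodic

section LimitPeriodic

/-- The periodic potentials, as a subset of the Banach space of bounded potentials. -/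
def periodicPotentials : Set ℓ^∞(ℤ, ℝ) := {V | ∃ p, 1 ≤ p ∧ IsPeriodic V p}

theorem zero_mem_periodicPotentials : 0 ∈ periodicPotentials := ⟨1, le_rfl, fun _ => rfl⟩

theorem isLimitPeriodic_of_mem_closure {V : ℓ^∞(ℤ, ℝ)} (hV : V ∈ closure periodicPotentials) :
    IsLimitPeriodic V := by
  obtain ⟨W, hW, hlim⟩ := mem_closure_iff_seq_limit.1 hV
  choose p hp using hW
  refine ⟨fun k => W k, p, hp, fun ε hε => ?_⟩
  obtain ⟨K, hK⟩ := Metric.tendsto_atTop.1 hlim ε hε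
  refine ⟨K, fun k hk n => ?_⟩
  calc |V n - W k n| ≤ ‖V - W k‖ := lp.norm_apply_le_norm ENNReal.top_ne_zero (V - W k) n
    _ ≤ ε := by
        rw [← dist_eq_norm, dist_comm]
        exact (hK k hk).le

theorem exists_periodicPotential_infDist_spectrum_le_of_finite {ι : Type*} [Finite ι] {E : ι → ℝ}
    {V : ℓ^∞(ℤ, ℝ)} (hV : V ∈ periodicPotentials) {ε δ : ℝ} (hε : 0 ≤ ε) (hδ : 0 < δ)
    (hE : ∀ i, infDist (E i : ℂ) (spectrum ℂ (schrodingerOp V)) ≤ ε) :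
    ∃ V' ∈ periodicPotentials, dist V V' ≤ ε ∧
      ∀ i, infDist (E i : ℂ) (spectrum ℂ (schrodingerOp V')) ≤ δ := by
  obtain ⟨p, hp, hVp⟩ := hV
  have hsa := isSelfAdjoint_schrodingerOp V
  choose y hy hyE using fun i => exists_real_mem_spectrum_dist_eq_infDist hsa (E i)
  choose ψ hψfin hψ using fun i =>
    exists_mem_norm_sub_smul_lt_of_mem_spectrum hsa.isStarNormal (hy i) hδ
      (dense_setOf_finite_support ENNReal.ofNat_ne_top)
  obtain ⟨W, q, hq, hpq, hWq, hWε, hplateau⟩ :=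
    exists_periodic_plateaus (c := fun i => E i - y i) hε
      (fun i => by simpa only [← Real.dist_eq, hyE] using hE i) hp (finite_iUnion hψfin)
  let W' : ℓ^∞(ℤ, ℝ) := ⟨W, memℓp_infty ⟨ε, forall_mem_range.2 hWε⟩⟩
  refine ⟨V + W', ⟨q, hq, ?_⟩, ?_, fun i => ?_⟩
  · exact (hVp.periodic_of_dvd (Int.natCast_dvd_natCast.2 hpq)).add hWq
  · rw [dist_self_add_right]
    exact lp.norm_le_of_forall_le hε hWε
  · obtain ⟨s, hps, hs⟩ := hplateau i
    have htranslate : ∀ n, ψ i n ≠ 0 → (V + W') (n + s) = V n + (E i - y i) := fun n hn => by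
      have hWn : W' (n + s) = E i - y i := hs n (mem_iUnion_of_mem i hn)
      rw [lp.coeFn_add, Pi.add_apply, hWn, hVp.periodic_of_dvd hps n]
    simpa only [add_sub_cancel] using
      infDist_spectrum_schrodingerOp_le_of_translate htranslate (hψ i)

theorem exists_periodicPotential_infDist_spectrum_le {S : Set ℝ} (hS : Bornology.IsBounded S)
    {V : ℓ^∞(ℤ, ℝ)} (hV : V ∈ periodicPotentials) {ε δ : ℝ} (hε : 0 ≤ ε) (hδ : 0 < δ)
    (hE : ∀ E ∈ S, infDist (E : ℂ) (spectrum ℂ (schrodingerOp V)) ≤ ε) :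
    ∃ V' ∈ periodicPotentials, dist V V' ≤ ε ∧
      ∀ E ∈ S, infDist (E : ℂ) (spectrum ℂ (schrodingerOp V')) ≤ δ := by
  obtain ⟨t, htS, htfin, hcover⟩ :=
    finite_approx_of_totallyBounded
      (hS.isCompact_closure.totallyBounded.subset subset_closure) (δ / 2) (half_pos hδ)
  have : Finite t := htfin
  obtain ⟨V', hV', hdist, hnet⟩ := exists_periodicPotential_infDist_spectrum_le_of_finite
    (E := ((↑) : t → ℝ)) hV hε (half_pos hδ) fun E => hE E (htS E.2)
  refine ⟨V', hV', hdist, fun E hES => ?_⟩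
  obtain ⟨F, hFt, hEF⟩ := mem_iUnion₂.1 (hcover hES)
  calc infDist (E : ℂ) (spectrum ℂ (schrodingerOp V'))
      ≤ infDist (F : ℂ) (spectrum ℂ (schrodingerOp V')) + dist (E : ℂ) F :=
        infDist_le_infDist_add_dist
    _ ≤ δ / 2 + δ / 2 := by
        rw [Complex.isometry_ofReal.dist_eq]
        exact add_le_add (hnet ⟨F, hFt⟩) (mem_ball.1 hEF).le
    _ = δ := add_halves δ

end LimitPeriodic

theorem statement18_general {S : Set ℝ} (hS : Bornology.IsBounded S) :
    ∃ (V : ℤ → ℝ) (H : lp (fun _ : ℤ => ℂ) 2 →L[ℂ] lp (fun _ : ℤ => ℂ) 2),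
      (∃ C : ℝ, ∀ n : ℤ, |V n| ≤ C) ∧ IsLimitPeriodic V ∧ IsSchrodingerOp V H ∧
      ∀ E ∈ S, (E : ℂ) ∈ spectrum ℂ H := by
  obtain ⟨ε₀, hε₀, hbase⟩ := (((lipschitz_infDist_pt (spectrum ℂ (schrodingerOp 0))).comp
    Complex.isometry_ofReal.lipschitz).isBounded_image hS).exists_pos_norm_le
  obtain ⟨V, hV, hVS⟩ := exists_mem_closure_forall_nonpos
    (f := fun (E : S) V => infDist (E : ℂ) (spectrum ℂ (schrodingerOp V)))
    (fun E => continuous_infDist_spectrum_schrodingerOp E) zero_mem_periodicPotentials hε₀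
    (fun E => (le_abs_self _).trans (hbase _ (mem_image_of_mem _ E.2))) fun ε hε V hV hVE => by
      simpa only [Subtype.forall] using exists_periodicPotential_infDist_spectrum_le hS hV hε.le
        (half_pos hε) fun E hE => hVE ⟨E, hE⟩
  refine ⟨V, schrodingerOp V, ⟨‖V‖, lp.norm_apply_le_norm ENNReal.top_ne_zero V⟩,
    isLimitPeriodic_of_mem_closure hV, isSchrodingerOp_schrodingerOp V, fun E hE => ?_⟩
  rw [(spectrum.isClosed _).mem_iff_infDist_zero (spectrum.nonempty _)]
  exact (hVS ⟨E, hE⟩).antisymm infDist_nonneg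

/-- there is a bounded limit-periodic potential whose Schrödinger
operator has spectrum containing `[-4,4]`. -/
theorem statement18 :
    ∃ (V : ℤ → ℝ) (H : lp (fun _ : ℤ => ℂ) 2 →L[ℂ] lp (fun _ : ℤ => ℂ) 2),
      (∃ C : ℝ, ∀ n : ℤ, |V n| ≤ C) ∧ IsLimitPeriodic V ∧ IsSchrodingerOp V H ∧
      ∀ E ∈ Set.Icc (-4 : ℝ) 4, (E : ℂ) ∈ spectrum ℂ H :=
  statement18_general (isBounded_Icc (-4) 4)
end
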